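/- Let d ≥ 2, let 𝓑 ⊂ ℝ^d be a closed ball, and let u be a C² function on ℝ^d \ 𝓑, not identically zero, satisfying Δu + ⟨b, ∇u⟩ + Vu = 0 on ℝ^d \ 𝓑, where b, V are Borel measurable with sup|b| ≤ M and sup|V| ≤ q². Assume condition (G): there exist constants r > 0 and C > 0 such that ∫_{B_r(x)} |∇u(y)|² dy ≤ C ∫_{B_r(x)} u(y)² dy for all sufficiently large |x|. Then, with κ := √(2(M√C + q² + C)) + 1, there exists a constant C_κ > 0 such that ∫_{B_r(x)} u(y)² dy ≥ C_κ exp(−κ|x|) for all sufficiently large |x|. In particular, if for every k > 0 there is a constant C_k with |u(x)| ≤ C_k e^{−k|x|} for all x ∈ ℝ^d \ 𝓑, then u ≡ 0. -/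

import Mathlib

open Metric Set Filter

noncomputable section

/-- `ℝ^d` as a Euclidean space. -/
abbrev Euc (d : ℕ) := EuclideanSpace ℝ (Fin d)

/-- First partial derivative `∂u/∂xᵢ`. -/
def pd {d : ℕ} (u : Euc d → ℝ) (i : Fin d) (x : Euc d) : ℝ :=
  fderiv ℝ u x (EuclideanSpace.single i 1)

/-- Second partial derivative `∂²u/∂xᵢ∂xⱼ`. -/
def pd2 {d : ℕ} (u : Euc d → ℝ) (i j : Fin d) (x : Euc d) : ℝ :=
  fderiv ℝ (fun y => pd u j y) x (EuclideanSpace.single i 1)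

/-- The second-order operator `𝓛u = Σ aᶦʲ ∂ᵢⱼu + Σ bᶦ ∂ᵢu`. -/
def Lop {d : ℕ} (a : Euc d → Matrix (Fin d) (Fin d) ℝ) (b : Euc d → Euc d)
    (u : Euc d → ℝ) (x : Euc d) : ℝ :=
  (∑ i, ∑ j, a x i j * pd2 u i j x) + ∑ i, b x i * pd u i x

/-- Frobenius norm of a matrix. -/
def frob {d : ℕ} (m : Matrix (Fin d) (Fin d) ℝ) : ℝ :=
  Real.sqrt (∑ i, ∑ j, (m i j) ^ 2)

/-- The quadratic form `⟨ξ, m ξ⟩`. -/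
def quadForm {d : ℕ} (m : Matrix (Fin d) (Fin d) ℝ) (ξ : Euc d) : ℝ :=
  ∑ i, ∑ j, m i j * ξ i * ξ j

/-- Local Hölder continuity on a set. -/
def LocallyHolderOn {E F : Type*} [PseudoMetricSpace E] [PseudoMetricSpace F]
    (f : E → F) (s : Set E) : Prop :=
  ∀ x ∈ s, ∃ (C r : NNReal), 0 < r ∧ r ≤ 1 ∧ ∃ ε > 0, HolderOnWith C r f (Metric.ball x ε ∩ s)

/-- Local Hölder continuity. -/
def LocallyHolder {E F : Type*} [PseudoMetricSpace E] [PseudoMetricSpace F] (f : E → F) : Prop :=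
  LocallyHolderOn f Set.univ

/-- The set of `λ ∈ ℝ` admitting a positive C² supersolution of `𝓛φ + Vφ ≤ λφ` on `D`. -/
def supersolutions {d : ℕ} (a : Euc d → Matrix (Fin d) (Fin d) ℝ) (b : Euc d → Euc d)
    (V : Euc d → ℝ) (D : Set (Euc d)) : Set ℝ :=
  {lam | ∃ φ : Euc d → ℝ, (∀ x ∈ D, 0 < φ x) ∧ ContDiffOn ℝ 2 φ D ∧
    ∀ x ∈ D, Lop a b φ x + V x * φ x ≤ lam * φ x}

/-- The generalized principal eigenvalue `λ*(𝓛,V)` on `D`. -/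
def lamStar {d : ℕ} (a : Euc d → Matrix (Fin d) (Fin d) ℝ) (b : Euc d → Euc d)
    (V : Euc d → ℝ) (D : Set (Euc d)) : ℝ :=
  sInf (supersolutions a b V D)

/-- `λ*(𝓛,V)` is finite: the defining set is nonempty and bounded below. -/
def lamStarFinite {d : ℕ} (a : Euc d → Matrix (Fin d) (Fin d) ℝ) (b : Euc d → Euc d)
    (V : Euc d → ℝ) (D : Set (Euc d)) : Prop :=
  (supersolutions a b V D).Nonempty ∧ BddBelow (supersolutions a b V D)

/-- A ground state of `𝓛 + W` in the open connected set `D`: a positive C² solution of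
minimal growth at infinity. -/
def IsGroundState {d : ℕ} (a : Euc d → Matrix (Fin d) (Fin d) ℝ) (b : Euc d → Euc d)
    (W : Euc d → ℝ) (u : Euc d → ℝ) (D : Set (Euc d)) : Prop :=
  (∀ x ∈ D, 0 < u x) ∧ ContDiffOn ℝ 2 u D ∧ (∀ x ∈ D, Lop a b u x + W x * u x = 0) ∧
  ∀ K : Set (Euc d), IsCompact K → K ⊆ D →
    ∀ v : Euc d → ℝ, ContDiffOn ℝ 2 v (D \ K) → (∀ x ∈ D \ K, 0 < v x) →
      (∀ x ∈ D \ K, Lop a b v x + W x * v x ≤ 0) →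
      ∃ K' : Set (Euc d), IsCompact K' ∧ K ⊆ K' ∧ K' ⊆ D ∧
        ∃ κ > 0, ∀ x ∈ D \ K', κ * u x ≤ v x

/-- Membership in `C₀⁺(ℝ^d)`: continuous, nonnegative, not identically zero, vanishing
at infinity. -/
def C0plus {d : ℕ} (h : Euc d → ℝ) : Prop :=
  Continuous h ∧ (∀ x, 0 ≤ h x) ∧ (∃ x, h x ≠ 0) ∧ Tendsto h (cocompact (Euc d)) (nhds 0)

/-- `λ*` is strictly monotone at `V` on the right. -/
def StrictMonoRight {d : ℕ} (a : Euc d → Matrix (Fin d) (Fin d) ℝ) (b : Euc d → Euc d)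
    (V : Euc d → ℝ) : Prop :=
  ∀ h : Euc d → ℝ, C0plus h →
    lamStar a b V Set.univ < lamStar a b (fun x => V x + h x) Set.univ

/-- `λ*` is strictly monotone at `V` (on both sides). -/
def StrictMonoAt {d : ℕ} (a : Euc d → Matrix (Fin d) (Fin d) ℝ) (b : Euc d → Euc d)
    (V : Euc d → ℝ) : Prop :=
  ∀ h : Euc d → ℝ, C0plus h →
    lamStar a b (fun x => V x - h x) Set.univ < lamStar a b V Set.univ ∧
    lamStar a b V Set.univ < lamStar a b (fun x => V x + h x) Set.univ

open MeasureTheory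

/-!
By (G), the moving integral `w x = ∫_{B_r(x)} u²` satisfies `Δ w ≤ c w` far out, with
`c = 2 (M √C + q² + C)`: differentiating under the integral gives `Δ w = ∫ 2 |∇u|² + 2 u Δu`, and
`2 |u| |∇u| ≤ √C u² + |∇u|² / √C` turns the drift into multiples of `∫ u²` and `∫ |∇u|² ≤ C ∫ u²`.
If `w` vanished far out, `u` would be a solution of `|Δu| ≲ |∇u| + |u|` with bounded support, hence
zero by a Carleman estimate with the convex weight `exp (τ |x - z|²)`. So `w` is positive by the
strong maximum principle, the exterior domain being connected, and comparison with `exp (-κ |x|)`,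
a strict subsolution of `Δ h = c h` for large `|x|` when `κ² > c`, gives the exponential lower
bound. A solution decaying faster than every exponential violates it.
-/

section Development

open InnerProductSpace Module
open scoped Gradient Laplacian Topology RealInnerProductSpace

variable {E : Type*} [NormedAddCommGroup E] [InnerProductSpace ℝ E]

section Calculus

variable {f g : E → ℝ} {x : E}

theorem contDiff_norm_sub_sq (z : E) {n : WithTop ℕ∞} : ContDiff ℝ n fun y : E => ‖y - z‖ ^ 2 :=
  (contDiff_id.sub contDiff_const).norm_sq ℝ

theorem contDiff_exp_norm_sub_sq {n : WithTop ℕ∞} (s : ℝ) (z : E) :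
    ContDiff ℝ n fun y => Real.exp (s * ‖y - z‖ ^ 2) :=
  Real.contDiff_exp.comp (contDiff_const.mul (contDiff_norm_sub_sq z))

section Gradient

variable [CompleteSpace E]

theorem gradient_mul (hf : DifferentiableAt ℝ f x) (hg : DifferentiableAt ℝ g x) :
    ∇ (fun y => f y * g y) x = f x • ∇ g x + g x • ∇ f x := by
  refine HasGradientAt.gradient ?_
  rw [hasGradientAt_iff_hasFDerivAt, map_add, map_smul, map_smul, toDual_gradient,
    toDual_gradient]
  exact hf.hasFDerivAt.mul hg.hasFDerivAt

theorem gradient_comp {H : ℝ → ℝ} {H' : ℝ} (hH : HasDerivAt H H' (f x))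
    (hf : DifferentiableAt ℝ f x) : ∇ (fun y => H (f y)) x = H' • ∇ f x := by
  refine HasGradientAt.gradient ?_
  rw [hasGradientAt_iff_hasFDerivAt, map_smul, toDual_gradient]
  exact hH.comp_hasFDerivAt x hf.hasFDerivAt

theorem hasGradientAt_norm_sub_sq (x z : E) :
    HasGradientAt (fun y => ‖y - z‖ ^ 2) ((2 : ℝ) • (x - z)) x := by
  rw [hasGradientAt_iff_hasFDerivAt]
  refine ((hasFDerivAt_id x).sub_const z).norm_sq.congr_fderiv ?_
  ext y
  simp [two_mul]

theorem contDiff_gradient {n : WithTop ℕ∞} (hf : ContDiff ℝ (n + 1) f) : ContDiff ℝ n (∇ f) :=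
  (toDual ℝ E).symm.contDiff.comp (hf.fderiv_right le_rfl)

theorem inner_fderiv_gradient (hf : ContDiffAt ℝ 2 f x) (v w : E) :
    ⟪fderiv ℝ (∇ f) x v, w⟫ = fderiv ℝ (fderiv ℝ f) x v w := by
  have hDf : HasFDerivAt (fderiv ℝ f) (fderiv ℝ (fderiv ℝ f) x) x :=
    ((hf.fderiv_right one_add_one_eq_two.le).differentiableAt one_ne_zero).hasFDerivAt
  have hgrad : HasFDerivAt (∇ f) _ x :=
    ((toDual ℝ E).symm.toContinuousLinearEquiv.toContinuousLinearMap).hasFDerivAt.comp x hDf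
  rw [hgrad.fderiv]
  simp

theorem inner_gradient_inner_sub_gradient (hf : ContDiff ℝ 2 f) (x z : E) :
    ⟪∇ (fun y => ⟪y - z, ∇ f y⟫) x, ∇ f x⟫ =
      ‖∇ f x‖ ^ 2 + ⟪x - z, ∇ (fun y => ‖∇ f y‖ ^ 2) x⟫ / 2 := by
  have hdiff : DifferentiableAt ℝ (∇ f) x :=
    (contDiff_gradient (n := 1) hf).differentiable one_ne_zero x
  have hsymm : IsSymmSndFDerivAt ℝ f x := hf.contDiffAt.isSymmSndFDerivAt (by simp)
  have hlhs : ⟪∇ (fun y => ⟪y - z, ∇ f y⟫) x, ∇ f x⟫ =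
      ⟪x - z, fderiv ℝ (∇ f) x (∇ f x)⟫ + ‖∇ f x‖ ^ 2 := by
    rw [inner_gradient_left, fderiv_inner_apply ℝ (by fun_prop) hdiff]
    simp [fderiv_sub_const]
  have hrhs : ⟪x - z, ∇ (fun y => ‖∇ f y‖ ^ 2) x⟫ =
      2 * ⟪∇ f x, fderiv ℝ (∇ f) x (x - z)⟫ := by
    rw [real_inner_comm, inner_gradient_left, hdiff.hasFDerivAt.norm_sq.fderiv]
    simp
  have hhess : ⟪x - z, fderiv ℝ (∇ f) x (∇ f x)⟫ = ⟪∇ f x, fderiv ℝ (∇ f) x (x - z)⟫ := by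
    rw [real_inner_comm, inner_fderiv_gradient hf.contDiffAt, hsymm,
      ← inner_fderiv_gradient hf.contDiffAt, real_inner_comm]
  rw [hlhs, hrhs, hhess]
  ring

theorem gradient_eq_zero_of_notMem_tsupport (hx : x ∉ tsupport f) : ∇ f x = 0 := by
  rw [gradient, fderiv_of_notMem_tsupport ℝ hx, map_zero]

theorem sum_fderiv_sq_eq_norm_gradient_sq {ι : Type*} [Fintype ι] (b : OrthonormalBasis ι ℝ E)
    (f : E → ℝ) (x : E) : ∑ i, fderiv ℝ f x (b i) ^ 2 = ‖∇ f x‖ ^ 2 := by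
  simp only [← b.sum_sq_norm_inner_left (∇ f x), inner_gradient_left, Real.norm_eq_abs, sq_abs]

theorem gradient_norm (hx : x ≠ 0) : ∇ (fun y : E => ‖y‖) x = ‖x‖⁻¹ • x := by
  have hx' : ‖x‖ ^ 2 ≠ 0 := by simpa using hx
  have h := gradient_comp (f := fun y : E => ‖y - 0‖ ^ 2) (x := x) (H := Real.sqrt)
    (Real.hasDerivAt_sqrt (by simpa using hx'))
    ((contDiff_norm_sub_sq 0).differentiable one_ne_zero).differentiableAt
  rw [(hasGradientAt_norm_sub_sq x 0).gradient] at h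
  simp only [sub_zero, Real.sqrt_sq (norm_nonneg _)] at h
  rw [h, smul_smul]
  congr 1
  field_simp

theorem norm_gradient_norm (hx : x ≠ 0) : ‖∇ (fun y : E => ‖y‖) x‖ = 1 := by
  rw [gradient_norm hx, norm_smul, norm_inv, norm_norm, inv_mul_cancel₀ (norm_ne_zero_iff.2 hx)]

theorem gradient_exp_norm_sub_sq (s : ℝ) (x z : E) :
    ∇ (fun y => Real.exp (s * ‖y - z‖ ^ 2)) x =
      (2 * s * Real.exp (s * ‖x - z‖ ^ 2)) • (x - z) := by
  have hH : HasDerivAt (fun t => Real.exp (s * t)) (s * Real.exp (s * ‖x - z‖ ^ 2))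
      (‖x - z‖ ^ 2) := by
    simpa [mul_comm] using ((hasDerivAt_id (‖x - z‖ ^ 2)).const_mul s).exp
  rw [gradient_comp (f := fun y => ‖y - z‖ ^ 2) hH
    (hasGradientAt_norm_sub_sq x z).differentiableAt,
    (hasGradientAt_norm_sub_sq x z).gradient, smul_smul]
  congr 1
  ring

theorem norm_gradient_exp_mul_sq_ge {v : E → ℝ} (hv : DifferentiableAt ℝ v x) (τ : ℝ) (z : E) :
    let f := fun y => Real.exp (τ / 2 * ‖y - z‖ ^ 2) * v y
    Real.exp (τ * ‖x - z‖ ^ 2) * ‖∇ v x‖ ^ 2 ≤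
      2 * ‖∇ f x‖ ^ 2 + 2 * τ ^ 2 * (‖x - z‖ ^ 2 * f x ^ 2) := by
  intro f
  have hgrad : Real.exp (τ / 2 * ‖x - z‖ ^ 2) • ∇ v x = ∇ f x - (τ * f x) • (x - z) := by
    rw [gradient_mul ((contDiff_exp_norm_sub_sq (n := 1) _ z).differentiable one_ne_zero x) hv,
      gradient_exp_norm_sub_sq]
    module
  have hexp : Real.exp (τ * ‖x - z‖ ^ 2) = Real.exp (τ / 2 * ‖x - z‖ ^ 2) ^ 2 := by
    rw [← Real.exp_nat_mul]
    ring_nf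
  calc Real.exp (τ * ‖x - z‖ ^ 2) * ‖∇ v x‖ ^ 2
      = ‖∇ f x - (τ * f x) • (x - z)‖ ^ 2 := by
        rw [← hgrad, norm_smul, mul_pow, hexp, Real.norm_eq_abs, Real.abs_exp]
    _ ≤ (‖∇ f x‖ + ‖(τ * f x) • (x - z)‖) ^ 2 := by gcongr; exact norm_sub_le _ _
    _ ≤ 2 * (‖∇ f x‖ ^ 2 + ‖(τ * f x) • (x - z)‖ ^ 2) := add_sq_le
    _ = 2 * ‖∇ f x‖ ^ 2 + 2 * τ ^ 2 * (‖x - z‖ ^ 2 * f x ^ 2) := by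
        rw [norm_smul, mul_pow, Real.norm_eq_abs, sq_abs]
        ring

end Gradient

section Laplacian

variable [FiniteDimensional ℝ E]

theorem laplacian_eq_sum_fderiv_fderiv {F ι : Type*} [NormedAddCommGroup F] [NormedSpace ℝ F]
    [Fintype ι] (b : OrthonormalBasis ι ℝ E) (f : E → F) (x : E) :
    Δ f x = ∑ i, fderiv ℝ (fderiv ℝ f) x (b i) (b i) := by
  simp [laplacian_eq_iteratedFDeriv_orthonormalBasis f b, iteratedFDeriv_two_apply]

theorem continuous_laplacian (hf : ContDiff ℝ 2 f) : Continuous (Δ f) := by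
  have hD2 : Continuous (fderiv ℝ (fderiv ℝ f)) :=
    (hf.fderiv_right one_add_one_eq_two.le).continuous_fderiv one_ne_zero
  rw [funext (laplacian_eq_sum_fderiv_fderiv (stdOrthonormalBasis ℝ E) f)]
  fun_prop

theorem laplacian_eq_zero_of_notMem_tsupport (hx : x ∉ tsupport f) : Δ f x = 0 := by
  have hx' : x ∉ tsupport (fderiv ℝ f) := fun h => hx (tsupport_fderiv_subset ℝ h)
  simp [laplacian_eq_sum_fderiv_fderiv (stdOrthonormalBasis ℝ E), fderiv_of_notMem_tsupport ℝ hx']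

theorem laplacian_comp {H H' : ℝ → ℝ} {H'' : ℝ} (hf : ContDiffAt ℝ 2 f x)
    (hH : ∀ᶠ s in 𝓝 (f x), HasDerivAt H (H' s) s) (hH' : HasDerivAt H' H'' (f x)) :
    Δ (fun y => H (f y)) x = H'' * ‖∇ f x‖ ^ 2 + H' (f x) * Δ f x := by
  have b := stdOrthonormalBasis ℝ E
  have hfd : ∀ᶠ y in 𝓝 x, DifferentiableAt ℝ f y :=
    (hf.eventually (by simp)).mono fun y hy => hy.differentiableAt two_ne_zero
  have hD1 : fderiv ℝ (fun y => H (f y)) =ᶠ[𝓝 x] fun y => H' (f y) • fderiv ℝ f y := by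
    filter_upwards [hfd, hf.continuousAt.eventually hH] with y hy hHy
    exact (hHy.comp_hasFDerivAt y hy.hasFDerivAt).fderiv
  have hD2 : HasFDerivAt (fderiv ℝ f) (fderiv ℝ (fderiv ℝ f) x) x :=
    ((hf.fderiv_right one_add_one_eq_two.le).differentiableAt one_ne_zero).hasFDerivAt
  have hD := ((hH'.comp_hasFDerivAt x hfd.self_of_nhds.hasFDerivAt).smul hD2).congr_of_eventuallyEq
    hD1
  simp only [laplacian_eq_sum_fderiv_fderiv b, ← sum_fderiv_sq_eq_norm_gradient_sq b, hD.fderiv,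
    Finset.mul_sum, ← Finset.sum_add_distrib]
  refine Finset.sum_congr rfl fun i _ => ?_
  simp
  ring

theorem laplacian_mul (hf : ContDiffAt ℝ 2 f x) (hg : ContDiffAt ℝ 2 g x) :
    Δ (fun y => f y * g y) x = f x * Δ g x + 2 * ⟪∇ f x, ∇ g x⟫ + g x * Δ f x := by
  have b := stdOrthonormalBasis ℝ E
  have hfd : ∀ᶠ y in 𝓝 x, DifferentiableAt ℝ f y ∧ DifferentiableAt ℝ g y :=
    ((hf.eventually (by simp)).and (hg.eventually (by simp))).mono fun y hy =>
      ⟨hy.1.differentiableAt two_ne_zero, hy.2.differentiableAt two_ne_zero⟩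
  have hD1 : fderiv ℝ (fun y => f y * g y) =ᶠ[𝓝 x]
      fun y => f y • fderiv ℝ g y + g y • fderiv ℝ f y :=
    hfd.mono fun y hy => fderiv_fun_mul hy.1 hy.2
  have hD2 : ∀ {h : E → ℝ}, ContDiffAt ℝ 2 h x →
      HasFDerivAt (fderiv ℝ h) (fderiv ℝ (fderiv ℝ h) x) x := fun hh =>
    ((hh.fderiv_right one_add_one_eq_two.le).differentiableAt one_ne_zero).hasFDerivAt
  have hD := ((hfd.self_of_nhds.1.hasFDerivAt.smul (hD2 hg)).add
    (hfd.self_of_nhds.2.hasFDerivAt.smul (hD2 hf))).congr_of_eventuallyEq hD1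
  rw [← b.sum_inner_mul_inner (∇ f x)]
  simp only [laplacian_eq_sum_fderiv_fderiv b, hD.fderiv, Finset.mul_sum,
    ← Finset.sum_add_distrib]
  refine Finset.sum_congr rfl fun i _ => ?_
  have hin : ⟪b i, ∇ g x⟫ = fderiv ℝ g x (b i) := by rw [real_inner_comm, inner_gradient_left]
  simp [inner_gradient_left, hin]
  ring

theorem laplacian_norm_sub_sq (x z : E) : Δ (fun y => ‖y - z‖ ^ 2) x = 2 * finrank ℝ E := by
  have b := stdOrthonormalBasis ℝ E
  have hD1 : fderiv ℝ (fun y : E => ‖y - z‖ ^ 2) = fun y => (2 : ℝ) • innerSL ℝ (y - z) := by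
    ext y v
    simp [(hasGradientAt_norm_sub_sq y z).fderiv_apply, inner_smul_left, inner_sub_left]
  have hD2 : HasFDerivAt (fun y => (2 : ℝ) • innerSL ℝ (y - z)) ((2 : ℝ) • innerSL ℝ) x :=
    ((innerSL ℝ).hasFDerivAt.comp x ((hasFDerivAt_id x).sub_const z)).const_smul (2 : ℝ)
  simp only [laplacian_eq_sum_fderiv_fderiv b, hD1, hD2.fderiv]
  change ∑ i, 2 * ⟪b i, b i⟫ = _
  simp [mul_comm]

theorem laplacian_sq (hf : ContDiffAt ℝ 2 f x) :
    Δ (fun y => f y ^ 2) x = 2 * ‖∇ f x‖ ^ 2 + 2 * f x * Δ f x :=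
  laplacian_comp (H := (· ^ 2)) (H' := (2 * ·)) hf
    (.of_forall fun s => by simpa using hasDerivAt_pow 2 s)
    (by simpa using (hasDerivAt_id (f x)).const_mul 2)

theorem laplacian_norm (hx : x ≠ 0) : Δ (fun y : E => ‖y‖) x = (finrank ℝ E - 1) / ‖x‖ := by
  have hx' : ‖x‖ ≠ 0 := by simpa using hx
  have h := laplacian_sq (contDiffAt_norm ℝ hx)
  rw [norm_gradient_norm hx] at h
  have h' := laplacian_norm_sub_sq x 0
  simp only [sub_zero] at h'
  rw [eq_div_iff hx']
  linarith

theorem laplacian_exp_norm_sub_sq (s : ℝ) (x z : E) :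
    Δ (fun y => Real.exp (s * ‖y - z‖ ^ 2)) x =
      Real.exp (s * ‖x - z‖ ^ 2) * (4 * s ^ 2 * ‖x - z‖ ^ 2 + 2 * s * finrank ℝ E) := by
  have hH : ∀ t, HasDerivAt (fun t => Real.exp (s * t)) (s * Real.exp (s * t)) t := fun t => by
    simpa [mul_comm] using ((hasDerivAt_id t).const_mul s).exp
  rw [laplacian_comp (contDiff_norm_sub_sq z).contDiffAt (.of_forall hH)
    ((hH _).const_mul s), (hasGradientAt_norm_sub_sq x z).gradient, laplacian_norm_sub_sq,
    norm_smul, Real.norm_ofNat]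
  ring

theorem conjugated_laplacian_exp_mul {v : E → ℝ} (hv : ContDiffAt ℝ 2 v x) (τ : ℝ) (z : E) :
    let f := fun y => Real.exp (τ / 2 * ‖y - z‖ ^ 2) * v y
    Δ f x + τ ^ 2 * (‖x - z‖ ^ 2 * f x) - τ * (2 * ⟪x - z, ∇ f x⟫ + finrank ℝ E * f x) =
      Real.exp (τ / 2 * ‖x - z‖ ^ 2) * Δ v x := by
  have hexp : ContDiff ℝ 2 fun y => Real.exp (τ / 2 * ‖y - z‖ ^ 2) := contDiff_exp_norm_sub_sq _ z
  simp only [laplacian_mul hexp.contDiffAt hv,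
    gradient_mul (hexp.differentiable two_ne_zero x) (hv.differentiableAt two_ne_zero),
    gradient_exp_norm_sub_sq, laplacian_exp_norm_sub_sq, inner_add_right, inner_smul_right,
    inner_smul_left, real_inner_self_eq_norm_sq, RCLike.conj_to_real]
  ring

end Laplacian

end Calculus

section MaximumPrinciple

theorem deriv_deriv_nonneg_of_isLocalMin {φ : ℝ → ℝ} {a : ℝ} (h : IsLocalMin φ a)
    (hφ : ContinuousAt φ a) : 0 ≤ deriv (deriv φ) a := by
  by_contra! hneg
  have hmax : IsLocalMax φ a := isLocalMax_of_deriv_deriv_neg hneg h.deriv_eq_zero hφ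
  have hconst : φ =ᶠ[𝓝 a] fun _ => φ a :=
    (h.and hmax).mono fun y hy => le_antisymm hy.2 hy.1
  rw [hconst.deriv.deriv_eq] at hneg
  simp at hneg

theorem fderiv_fderiv_apply_nonneg_of_isLocalMin {f : E → ℝ} {x : E} (hf : ContDiffAt ℝ 2 f x)
    (hmin : IsLocalMin f x) (e : E) : 0 ≤ fderiv ℝ (fderiv ℝ f) x e e := by
  have hline : ∀ t : ℝ, HasDerivAt (fun t : ℝ => x + t • e) e t := fun t => by
    simpa using ((hasDerivAt_id t).smul_const e).const_add x
  have hx : Tendsto (fun t : ℝ => x + t • e) (𝓝 0) (𝓝 (x + (0 : ℝ) • e)) :=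
    (hline 0).continuousAt.tendsto
  have hx0 : x + (0 : ℝ) • e = x := by simp
  rw [← hx0] at hf hmin ⊢
  have hd1 : deriv (fun t : ℝ => f (x + t • e)) =ᶠ[𝓝 0] fun t => fderiv ℝ f (x + t • e) e := by
    filter_upwards [hx.eventually (hf.eventually (by simp))] with t ht
    exact ((ht.differentiableAt two_ne_zero).hasFDerivAt.comp_hasDerivAt t (hline t)).deriv
  have hD2 : HasFDerivAt (fderiv ℝ f) (fderiv ℝ (fderiv ℝ f) (x + (0 : ℝ) • e))
      (x + (0 : ℝ) • e) :=
    ((hf.fderiv_right one_add_one_eq_two.le).differentiableAt one_ne_zero).hasFDerivAt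
  have hd2 : deriv (fun t : ℝ => fderiv ℝ f (x + t • e) e) 0 =
      fderiv ℝ (fderiv ℝ f) (x + (0 : ℝ) • e) e e := by
    have happ : HasFDerivAt (fun y => fderiv ℝ f y e) _ _ :=
      (ContinuousLinearMap.apply ℝ ℝ e).hasFDerivAt.comp _ hD2
    exact (happ.comp_hasDerivAt (0 : ℝ) (hline 0)).deriv
  rw [← hd2, ← hd1.deriv_eq]
  exact deriv_deriv_nonneg_of_isLocalMin
    (IsMinFilter.comp_tendsto (g := fun t : ℝ => x + t • e) hmin hx)
    (ContinuousAt.comp (f := fun t : ℝ => x + t • e) hf.continuousAt (hline 0).continuousAt)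

variable [FiniteDimensional ℝ E] {h w : E → ℝ} {c : ℝ}

theorem laplacian_nonneg_of_isLocalMin {f : E → ℝ} {x : E} (hf : ContDiffAt ℝ 2 f x)
    (hmin : IsLocalMin f x) : 0 ≤ Δ f x := by
  rw [laplacian_eq_sum_fderiv_fderiv (stdOrthonormalBasis ℝ E)]
  exact Finset.sum_nonneg fun i _ => fderiv_fderiv_apply_nonneg_of_isLocalMin hf hmin _

theorem le_of_laplacian_lt {K U : Set E} (hK : IsCompact K) (hU : IsOpen U) (hUK : U ⊆ K)
    (hc : 0 ≤ c) (hwK : ContinuousOn w K) (hhK : ContinuousOn h K)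
    (hw : ∀ x ∈ U, ContDiffAt ℝ 2 w x) (hh : ∀ x ∈ U, ContDiffAt ℝ 2 h x)
    (hΔw : ∀ x ∈ U, Δ w x ≤ c * w x) (hΔh : ∀ x ∈ U, c * h x < Δ h x)
    (hbd : ∀ x ∈ K \ U, h x ≤ w x) {x : E} (hx : x ∈ K) : h x ≤ w x := by
  obtain ⟨y, hyK, hy⟩ := hK.exists_isMinOn ⟨x, hx⟩ (hwK.sub hhK)
  suffices 0 ≤ w y - h y from sub_nonneg.1 (this.trans (hy hx))
  by_contra! hneg
  have hyU : y ∈ U := by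
    by_contra hyU
    exact hneg.not_ge (sub_nonneg.2 (hbd y ⟨hyK, hyU⟩))
  have hmin : IsLocalMin (w - h) y := hy.isLocalMin (mem_of_superset (hU.mem_nhds hyU) hUK)
  have hlap : 0 ≤ Δ (w - h) y :=
    laplacian_nonneg_of_isLocalMin ((hw y hyU).sub (hh y hyU)) hmin
  rw [(hw y hyU).laplacian_sub (hh y hyU)] at hlap
  have hcneg : c * (w y - h y) ≤ 0 := mul_nonpos_of_nonneg_of_nonpos hc hneg.le
  linarith [hΔw y hyU, hΔh y hyU]

theorem le_of_laplacian_lt_annulus {p : E} {R₁ R₂ : ℝ} (hc : 0 ≤ c)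
    (hw : ∀ x, R₁ ≤ ‖x - p‖ → ‖x - p‖ ≤ R₂ → ContDiffAt ℝ 2 w x)
    (hh : ∀ x, R₁ ≤ ‖x - p‖ → ‖x - p‖ ≤ R₂ → ContDiffAt ℝ 2 h x)
    (hΔw : ∀ x, R₁ < ‖x - p‖ → ‖x - p‖ < R₂ → Δ w x ≤ c * w x)
    (hΔh : ∀ x, R₁ < ‖x - p‖ → ‖x - p‖ < R₂ → c * h x < Δ h x)
    (hinner : ∀ x, ‖x - p‖ = R₁ → h x ≤ w x) (houter : ∀ x, ‖x - p‖ = R₂ → h x ≤ w x) {x : E}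
    (hx₁ : R₁ ≤ ‖x - p‖) (hx₂ : ‖x - p‖ ≤ R₂) : h x ≤ w x := by
  have hcont : Continuous fun y : E => ‖y - p‖ := by fun_prop
  have hK : IsCompact {y : E | R₁ ≤ ‖y - p‖ ∧ ‖y - p‖ ≤ R₂} := by
    refine (isCompact_closedBall p R₂).of_isClosed_subset
      ((isClosed_Ici.preimage hcont).inter (isClosed_Iic.preimage hcont)) fun y hy => ?_
    simpa [dist_eq_norm] using hy.2
  refine le_of_laplacian_lt hK (U := {y | R₁ < ‖y - p‖ ∧ ‖y - p‖ < R₂})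
    ((isOpen_Ioi.preimage hcont).inter (isOpen_Iio.preimage hcont))
    (fun y hy => ⟨hy.1.le, hy.2.le⟩) hc
    (fun y hy => (hw y hy.1 hy.2).continuousAt.continuousWithinAt)
    (fun y hy => (hh y hy.1 hy.2).continuousAt.continuousWithinAt)
    (fun y hy => hw y hy.1.le hy.2.le) (fun y hy => hh y hy.1.le hy.2.le)
    (fun y hy => hΔw y hy.1 hy.2) (fun y hy => hΔh y hy.1 hy.2) ?_ ⟨hx₁, hx₂⟩
  rintro y ⟨⟨hy₁, hy₂⟩, hyU⟩
  rcases hy₁.eq_or_lt with hy | hy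
  · exact hinner y hy.symm
  · exact houter y (hy₂.antisymm (not_lt.1 fun hlt => hyU ⟨hy, hlt⟩))

theorem laplacian_const_mul_sub_const {g : E → ℝ} {x : E} (hg : ContDiffAt ℝ 2 g x) (m a : ℝ) :
    Δ (fun y => m * g y - a) x = m * Δ g x := by
  have hsub : Δ (m • g - fun _ : E => a) x = Δ (m • g) x - Δ (fun _ : E => a) x :=
    (hg.const_smul m).laplacian_sub contDiffAt_const
  rw [laplacian_smul m hg, laplacian_const] at hsub
  exact hsub.trans (sub_zero _)

theorem mul_lt_laplacian_const_mul_sub_const {g : E → ℝ} {x : E} (hg : ContDiffAt ℝ 2 g x)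
    (hlt : c * g x < Δ g x) (hc : 0 ≤ c) {m a : ℝ} (hm : 0 < m) (ha : 0 ≤ a) :
    c * (m * g x - a) < Δ (fun y => m * g y - a) x := by
  rw [laplacian_const_mul_sub_const hg]
  have hca : 0 ≤ c * a := mul_nonneg hc ha
  calc c * (m * g x - a) ≤ m * (c * g x) := by linarith
    _ < m * Δ g x := by gcongr

theorem exists_lt_mul_sub {δ : ℝ} (hc : 0 ≤ c) (hδ : 0 < δ) (n : ℕ) :
    ∃ α : ℝ, 0 < α ∧ c < 4 * α ^ 2 * δ ^ 2 - 2 * α * n := by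
  have hα : 0 < (n + 1) / δ ^ 2 + c := by positivity
  refine ⟨(n + 1) / δ ^ 2 + c, hα, ?_⟩
  set α := (n + 1) / δ ^ 2 + c with hα_def
  have hαδ : (n : ℝ) + 1 ≤ α * δ ^ 2 := by
    rw [hα_def, add_mul, div_mul_cancel₀ _ (by positivity)]
    exact le_add_of_nonneg_right (by positivity)
  have hn : (0 : ℝ) ≤ n := n.cast_nonneg
  have hcα : c < α := lt_add_of_pos_left c (by positivity)
  calc c < 2 * α * 1 := by linarith
    _ ≤ 2 * α * (2 * (α * δ ^ 2) - n) := by gcongr; linarith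
    _ = 4 * α ^ 2 * δ ^ 2 - 2 * α * n := by ring

theorem pos_of_pos_center {p : E} {R : ℝ} (hc : 0 ≤ c)
    (hw : ∀ x, ‖x - p‖ ≤ R → ContDiffAt ℝ 2 w x) (hw0 : ∀ x, ‖x - p‖ ≤ R → 0 ≤ w x)
    (hΔw : ∀ x, ‖x - p‖ < R → Δ w x ≤ c * w x) (hp : 0 < w p) {x : E} (hx : ‖x - p‖ < R) :
    0 < w x := by
  have hR : 0 < R := (norm_nonneg _).trans_lt hx
  obtain ⟨δ, hδ, hwδ⟩ : ∃ δ > 0, ∀ y, ‖y - p‖ ≤ δ → w p / 2 < w y := by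
    obtain ⟨δ, hδ, h⟩ := nhds_basis_closedBall.mem_iff.1
      ((hw p (by simpa using hR.le)).continuousAt.eventually_const_lt (half_lt_self hp))
    exact ⟨δ, hδ, fun y hy => h (by simpa [dist_eq_norm] using hy)⟩
  rcases le_total ‖x - p‖ δ with hxδ | hxδ
  · exact (half_pos hp).trans (hwδ x hxδ)
  obtain ⟨α, hα0, hα⟩ := exists_lt_mul_sub hc hδ (finrank ℝ E)
  have hm : 0 < w p / 2 := half_pos hp
  have hg : ContDiff ℝ 2 fun y : E => Real.exp (-α * ‖y - p‖ ^ 2) := contDiff_exp_norm_sub_sq _ p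
  have hlt : ∀ {s t : ℝ}, 0 ≤ s → s < t → Real.exp (-α * t ^ 2) < Real.exp (-α * s ^ 2) :=
    fun hs hst => Real.exp_lt_exp.2 (by simpa only [neg_mul, neg_lt_neg_iff] using by gcongr)
  -- Hopf's barrier is a strict subsolution outside the ball of radius `δ`.
  have hle : w p / 2 * Real.exp (-α * ‖x - p‖ ^ 2) - w p / 2 * Real.exp (-α * R ^ 2) ≤ w x := by
    refine le_of_laplacian_lt_annulus
      (h := fun y => w p / 2 * Real.exp (-α * ‖y - p‖ ^ 2) - w p / 2 * Real.exp (-α * R ^ 2))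
      (R₁ := δ) (R₂ := R) (p := p) hc (fun y _ hy => hw y hy)
      (fun y _ _ => ((contDiff_const.mul hg).sub contDiff_const).contDiffAt)
      (fun y _ hy => hΔw y hy) (fun y hy _ => ?_) (fun y hy => ?_) (fun y hy => ?_) hxδ hx.le
    · refine mul_lt_laplacian_const_mul_sub_const hg.contDiffAt ?_ hc hm (by positivity)
      rw [laplacian_exp_norm_sub_sq, mul_comm c]
      have hδy : 4 * α ^ 2 * δ ^ 2 ≤ 4 * α ^ 2 * ‖y - p‖ ^ 2 := by gcongr
      gcongr
      linarith
    · rw [hy]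
      have hδ1 : Real.exp (-α * δ ^ 2) ≤ 1 := Real.exp_le_one_iff.2 (by nlinarith)
      have hR0 : 0 < w p / 2 * Real.exp (-α * R ^ 2) := by positivity
      nlinarith [hwδ y hy.le]
    · rw [hy, sub_self]
      exact hw0 y hy.le
  have hexp := hlt (norm_nonneg _) hx
  exact (sub_pos.2 (by gcongr)).trans_le hle

theorem pos_of_laplacian_le {Ω : Set E} (hΩ : IsOpen Ω) (hΩc : IsPreconnected Ω) (hc : 0 ≤ c)
    (hw : ContDiffOn ℝ 2 w Ω) (hw0 : ∀ x ∈ Ω, 0 ≤ w x) (hΔw : ∀ x ∈ Ω, Δ w x ≤ c * w x)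
    (hpos : ∃ x ∈ Ω, 0 < w x) {x : E} (hx : x ∈ Ω) : 0 < w x := by
  suffices Ω ⊆ Ω ∩ w ⁻¹' Ioi 0 from (this hx).2
  refine hΩc.subset_of_closure_inter_subset
    (hw.continuousOn.isOpen_inter_preimage hΩ isOpen_Ioi)
    (hpos.imp fun y hy => ⟨hy.1, hy⟩) fun y hy => ⟨hy.2, ?_⟩
  obtain ⟨ε, hε, hball⟩ := Metric.isOpen_iff.1 hΩ y hy.2
  obtain ⟨p, hp, hyp⟩ := Metric.mem_closure_iff.1 hy.1 (ε / 2) (half_pos hε)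
  have hsub : ∀ x, ‖x - p‖ ≤ ε / 2 → x ∈ Ω := fun x hx => hball <| by
    rw [← dist_eq_norm] at hx
    rw [mem_ball]
    linarith [dist_triangle x p y, dist_comm p y]
  exact pos_of_pos_center hc (fun x hx => hw.contDiffAt (hΩ.mem_nhds (hsub x hx)))
    (fun x hx => hw0 x (hsub x hx)) (fun x hx => hΔw x (hsub x hx.le)) hp.2
    (by rwa [← dist_eq_norm])

end MaximumPrinciple

section ExteriorDomain

theorem isPreconnected_setOf_lt_norm {F : Type*} [NormedAddCommGroup F] [NormedSpace ℝ F]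
    (hF : 1 < Module.rank ℝ F) {R : ℝ} (hR : 0 ≤ R) : IsPreconnected {x : F | R < ‖x‖} := by
  have himage : {x : F | R < ‖x‖} = (fun p : F × ℝ => p.2 • p.1) '' sphere 0 1 ×ˢ Ioi R := by
    ext x
    simp only [mem_ofPred_eq, mem_image, mem_prod, mem_sphere_zero_iff_norm, mem_Ioi, Prod.exists]
    constructor
    · intro hx
      have hx0 : ‖x‖ ≠ 0 := (hR.trans_lt hx).ne'
      exact ⟨‖x‖⁻¹ • x, ‖x‖, ⟨by simp [norm_smul, hx0], hx⟩, smul_inv_smul₀ hx0 x⟩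
    · rintro ⟨y, t, ⟨hy, ht⟩, rfl⟩
      rw [norm_smul, hy, mul_one]
      exact ht.trans_le (le_abs_self t)
  rw [himage]
  exact ((isPreconnected_sphere hF 0 1).prod isPreconnected_Ioi).image _ (by fun_prop)

variable [FiniteDimensional ℝ E]

theorem laplacian_exp_neg_mul_norm (κ : ℝ) {x : E} (hx : x ≠ 0) :
    Δ (fun y : E => Real.exp (-(κ * ‖y‖))) x =
      (κ ^ 2 - κ * ((finrank ℝ E - 1) / ‖x‖)) * Real.exp (-(κ * ‖x‖)) := by
  have hexp : ∀ t, HasDerivAt (fun t => Real.exp (-(κ * t))) (-κ * Real.exp (-(κ * t))) t :=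
    fun t => by simpa [mul_comm] using ((hasDerivAt_id t).const_mul κ).neg.exp
  rw [laplacian_comp (contDiffAt_norm ℝ hx) (.of_forall hexp) ((hexp _).const_mul (-κ)),
    norm_gradient_norm hx, laplacian_norm hx]
  ring

theorem eventually_forall_mul_exp_lt_laplacian {c κ : ℝ} (hcκ : c < κ ^ 2) :
    ∀ᶠ R in atTop, ∀ x : E, R ≤ ‖x‖ →
      c * Real.exp (-(κ * ‖x‖)) < Δ (fun y : E => Real.exp (-(κ * ‖y‖))) x := by
  have hlim : Tendsto (fun t : ℝ => κ ^ 2 - κ * ((finrank ℝ E - 1) / t)) atTop (𝓝 (κ ^ 2)) := by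
    simpa using ((tendsto_const_nhds.div_atTop tendsto_id).const_mul κ).const_sub (κ ^ 2)
  filter_upwards [eventually_forall_ge_atTop.2 (hlim.eventually_const_lt hcκ),
    eventually_gt_atTop 0] with R hR hR0 x hx
  rw [laplacian_exp_neg_mul_norm κ (norm_pos_iff.1 (hR0.trans_le hx))]
  have := hR ‖x‖ hx
  gcongr

theorem exists_exp_le_of_laplacian_le {w : E → ℝ} {c R κ : ℝ} (hc : 0 ≤ c) (hκ : 0 < κ)
    (hcκ : c < κ ^ 2) (hw : ContDiffOn ℝ 2 w {x | R < ‖x‖}) (hpos : ∀ x, R < ‖x‖ → 0 < w x)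
    (hΔw : ∀ x, R < ‖x‖ → Δ w x ≤ c * w x) :
    ∃ c₁ > 0, ∃ R₁, ∀ x, R₁ ≤ ‖x‖ → c₁ * Real.exp (-(κ * ‖x‖)) ≤ w x := by
  have hwc : ∀ x, R < ‖x‖ → ContDiffAt ℝ 2 w x := fun x hx =>
    hw.contDiffAt ((isOpen_lt continuous_const continuous_norm).mem_nhds hx)
  obtain ⟨R₁, hbar, hR, hR0⟩ := ((eventually_forall_mul_exp_lt_laplacian (E := E) hcκ).and
    ((eventually_gt_atTop R).and (eventually_gt_atTop 0))).exists
  obtain ⟨m, hm, hmw⟩ := (isCompact_sphere (0 : E) R₁).exists_forall_le' (a := 0)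
    (fun x hx => (hwc x (by simp_all)).continuousAt.continuousWithinAt)
    (fun x hx => hpos x (by simp_all))
  refine ⟨m, hm, R₁, fun x hx => le_of_forall_sub_le fun ε hε => ?_⟩
  have hlim : Tendsto (fun t : ℝ => m * Real.exp (-(κ * t))) atTop (𝓝 0) := by
    simpa using (Real.tendsto_exp_neg_atTop_nhds_zero.comp
      (tendsto_id.const_mul_atTop hκ)).const_mul m
  obtain ⟨R₂, hR₂, hxR₂⟩ := ((hlim.eventually_lt_const hε).and (eventually_ge_atTop ‖x‖)).exists
  have hg : ∀ y : E, R₁ ≤ ‖y‖ → ContDiffAt ℝ 2 (fun y : E => Real.exp (-(κ * ‖y‖))) y :=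
    fun y hy => (contDiffAt_const.mul
      (contDiffAt_norm ℝ (norm_pos_iff.1 (hR0.trans_le hy)))).neg.exp
  refine le_of_laplacian_lt_annulus (h := fun y => m * Real.exp (-(κ * ‖y‖)) - ε) (p := 0)
    (R₁ := R₁) (R₂ := R₂) hc ?_ ?_ ?_ ?_ ?_ ?_ (by simpa) (by simpa) <;> simp only [sub_zero]
  · exact fun y hy _ => hwc y (hR.trans_le hy)
  · exact fun y hy _ => (contDiffAt_const.mul (hg y hy)).sub contDiffAt_const
  · exact fun y hy _ => hΔw y (hR.trans hy)
  · exact fun y hy _ =>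
      mul_lt_laplacian_const_mul_sub_const (hg y hy.le) (hbar y hy.le) hc hm hε.le
  · intro y hy
    have hexp : Real.exp (-(κ * ‖y‖)) ≤ 1 := Real.exp_le_one_iff.2 (by simpa using by positivity)
    linarith [mul_le_of_le_one_right hm.le hexp, hmw y (by simpa using hy)]
  · intro y hy
    rw [hy]
    linarith [hpos y (hR.trans_le (hx.trans (hxR₂.trans hy.ge)))]

end ExteriorDomain

section PointwiseBounds

variable {l w a M Q : ℝ} {b p : E}

theorem sq_le_of_add_inner_add_mul_eq_zero (h : l + ⟪b, p⟫ + w * a = 0)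
    (hb : ‖b‖ ≤ M) (hw : |w| ≤ Q) : l ^ 2 ≤ 2 * (M ^ 2 + Q ^ 2) * (‖p‖ ^ 2 + a ^ 2) := by
  have hbp : ⟪b, p⟫ ^ 2 ≤ M ^ 2 * ‖p‖ ^ 2 := by
    rw [← mul_pow, ← sq_abs]
    exact pow_le_pow_left₀ (abs_nonneg _) ((abs_real_inner_le_norm b p).trans (by gcongr)) 2
  have hwa : (w * a) ^ 2 ≤ Q ^ 2 * a ^ 2 := by
    rw [mul_pow, ← sq_abs w]
    gcongr
  calc l ^ 2 = (⟪b, p⟫ + w * a) ^ 2 := by rw [← neg_sq]; congr 1; linarith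
    _ ≤ 2 * (⟪b, p⟫ ^ 2 + (w * a) ^ 2) := add_sq_le
    _ ≤ 2 * (M ^ 2 * ‖p‖ ^ 2 + Q ^ 2 * a ^ 2) := by gcongr
    _ ≤ 2 * (M ^ 2 + Q ^ 2) * (‖p‖ ^ 2 + a ^ 2) := by
      linarith [mul_nonneg (sq_nonneg M) (sq_nonneg a), mul_nonneg (sq_nonneg Q) (sq_nonneg ‖p‖)]

theorem two_mul_mul_le_of_add_inner_add_mul_eq_zero {s : ℝ}
    (h : l + ⟪b, p⟫ + w * a = 0) (hb : ‖b‖ ≤ M) (hw : |w| ≤ Q) (hs : 0 < s) :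
    2 * (a * l) ≤ M / s * ‖p‖ ^ 2 + (M * s + 2 * Q) * a ^ 2 := by
  have hM : 0 ≤ M := (norm_nonneg b).trans hb
  have hdrift : -(a * ⟪b, p⟫) ≤ M * (|a| * ‖p‖) :=
    calc -(a * ⟪b, p⟫) ≤ |a| * |⟪b, p⟫| := (neg_le_abs _).trans_eq (abs_mul _ _)
      _ ≤ |a| * (M * ‖p‖) := by gcongr; exact (abs_real_inner_le_norm b p).trans (by gcongr)
      _ = M * (|a| * ‖p‖) := by ring
  have hpotential : -(w * a ^ 2) ≤ Q * a ^ 2 := by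
    rw [← neg_mul]
    gcongr
    exact (neg_le_abs w).trans hw
  have hyoung : 2 * (|a| * ‖p‖) ≤ ‖p‖ ^ 2 / s + s * a ^ 2 := by
    have h := div_nonneg (sq_nonneg (‖p‖ - s * |a|)) hs.le
    have e : (‖p‖ - s * |a|) ^ 2 / s = ‖p‖ ^ 2 / s - 2 * (|a| * ‖p‖) + s * |a| ^ 2 := by
      field_simp
      ring
    rw [e, sq_abs] at h
    linarith
  calc 2 * (a * l) = 2 * -(a * ⟪b, p⟫) + 2 * -(w * a ^ 2) := by linear_combination 2 * a * h
    _ ≤ M * (2 * (|a| * ‖p‖)) + 2 * (Q * a ^ 2) := by linarith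
    _ ≤ M * (‖p‖ ^ 2 / s + s * a ^ 2) + 2 * (Q * a ^ 2) := by gcongr
    _ = M / s * ‖p‖ ^ 2 + (M * s + 2 * Q) * a ^ 2 := by ring

end PointwiseBounds

section Exterior

variable {G : Type*} [NormedAddCommGroup G] {ρ r : ℝ}

theorem lt_norm_sub_of_mem_ball {x y z : G} (hx : ‖z‖ + ρ + r ≤ ‖x‖) (hy : y ∈ ball x r) :
    ρ < ‖y - z‖ := by
  rw [mem_ball_iff_norm'] at hy
  have := norm_le_norm_sub_add x y
  have := norm_le_norm_sub_add y z
  linarith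

theorem exists_mul_exp_lt_mul_exp [NormedSpace ℝ G] [Nontrivial G] {c κ κ' : ℝ} (hc : 0 < c)
    (hκ : κ < κ') (B R : ℝ) :
    ∃ x : G, R ≤ ‖x‖ ∧ B * Real.exp (-(κ' * ‖x‖)) < c * Real.exp (-(κ * ‖x‖)) := by
  have hlim : Tendsto (fun t => B * Real.exp (-((κ' - κ) * t))) atTop (𝓝 (B * 0)) :=
    (Real.tendsto_exp_neg_atTop_nhds_zero.comp
      (tendsto_id.const_mul_atTop (sub_pos.2 hκ))).const_mul B
  rw [mul_zero] at hlim
  obtain ⟨x, hBx, hRx⟩ := ((tendsto_norm_cobounded_atTop (E := G)).eventually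
    ((hlim.eventually_lt_const hc).and (eventually_ge_atTop R))).exists
  refine ⟨x, hRx, ?_⟩
  calc B * Real.exp (-(κ' * ‖x‖))
      = B * Real.exp (-((κ' - κ) * ‖x‖)) * Real.exp (-(κ * ‖x‖)) := by
        rw [mul_assoc, ← Real.exp_add]
        congr 2
        ring
    _ < c * Real.exp (-(κ * ‖x‖)) := by gcongr

theorem exists_contDiff_eqOn_compl_ball [FiniteDimensional ℝ E] {u : E → ℝ} {z : E} {n : ℕ∞}
    {ρ₁ : ℝ} (hρ : 0 ≤ ρ) (hρ₁ : ρ < ρ₁)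
    (hu : ContDiffOn ℝ n u (closedBall z ρ)ᶜ) :
    ∃ U : E → ℝ, ContDiff ℝ n U ∧ EqOn U u (ball z ρ₁)ᶜ := by
  obtain ⟨ρ', hρ', hρ'₁⟩ := exists_between hρ₁
  let χ : ContDiffBump z := ⟨ρ', ρ₁, hρ.trans_lt hρ', hρ'₁⟩
  refine ⟨fun x => (1 - χ x) * u x, contDiff_iff_contDiffAt.2 fun x => ?_, fun x hx => ?_⟩
  · by_cases hx : x ∈ closedBall z ρ
    · refine (contDiffAt_const (c := (0 : ℝ))).congr_of_eventuallyEq ?_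
      filter_upwards [χ.eventuallyEq_one_of_mem_ball (closedBall_subset_ball hρ' hx)] with y hy
      simp [hy]
    · exact (contDiffAt_const.sub χ.contDiffAt).mul
        (hu.contDiffAt (isClosed_closedBall.isOpen_compl.mem_nhds hx))
  · have hχx : χ x = 0 := χ.zero_of_le_dist (by simpa using hx)
    simp [hχx]

end Exterior

theorem integrable_of_eq_zero_off_tsupport {X G : Type*} [TopologicalSpace X] [MeasurableSpace X]
    [OpensMeasurableSpace X] {μ : Measure X} [IsFiniteMeasureOnCompacts μ] [NormedAddCommGroup G]
    {F : X → ℝ} {v : X → G} (hF : Continuous F) (hv : HasCompactSupport v)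
    (h : ∀ x ∉ tsupport v, F x = 0) : Integrable F μ :=
  hF.integrable_of_hasCompactSupport (.intro' hv (isClosed_tsupport v) fun {x} => h x)

variable [FiniteDimensional ℝ E] [MeasurableSpace E] [BorelSpace E]
  {μ : Measure E} [μ.IsAddHaarMeasure]

section IntegrationByParts

variable {f g : E → ℝ}

theorem integral_mul_fderiv_eq_neg_fderiv_mul (hf : ContDiff ℝ 1 f) (hfs : HasCompactSupport f)
    (hg : ContDiff ℝ 1 g) (v : E) :
    ∫ x, f x * fderiv ℝ g x v ∂μ = -∫ x, fderiv ℝ f x v * g x ∂μ := by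
  have hDf := hf.continuous_fderiv one_ne_zero
  have hDg := hg.continuous_fderiv one_ne_zero
  have hf0 : ∀ x ∉ tsupport f, f x = 0 := fun x => image_eq_zero_of_notMem_tsupport
  refine integral_mul_fderiv_eq_neg_fderiv_mul_of_integrable
    (integrable_of_eq_zero_off_tsupport (by fun_prop) hfs fun x hx => ?_)
    (integrable_of_eq_zero_off_tsupport (by fun_prop) hfs fun x hx => ?_)
    (integrable_of_eq_zero_off_tsupport (by fun_prop) hfs fun x hx => ?_)
    (fun x _ => (hf.differentiable one_ne_zero).differentiableAt)
    (fun x _ => (hg.differentiable one_ne_zero).differentiableAt)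
  · simp [fderiv_of_notMem_tsupport ℝ hx]
  · simp [hf0 x hx]
  · simp [hf0 x hx]

theorem integral_mul_laplacian_eq_neg (hf : ContDiff ℝ 2 f) (hg : ContDiff ℝ 1 g)
    (hgs : HasCompactSupport g) :
    ∫ x, g x * Δ f x ∂μ = -∫ x, ⟪∇ g x, ∇ f x⟫ ∂μ := by
  have b := stdOrthonormalBasis ℝ E
  have hDf : ContDiff ℝ 1 (fderiv ℝ f) := hf.fderiv_right one_add_one_eq_two.le
  have hD2f := hDf.continuous_fderiv one_ne_zero
  have hDg := hg.continuous_fderiv one_ne_zero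
  have hDf' := hDf.continuous
  have hDDf : ∀ v x, fderiv ℝ (fun y => fderiv ℝ f y v) x v = fderiv ℝ (fderiv ℝ f) x v v :=
    fun v x => by
      simp [fderiv_clm_apply (hDf.differentiable one_ne_zero x) (differentiableAt_const v)]
  have hinner : ∀ x, ⟪∇ g x, ∇ f x⟫ = ∑ i, fderiv ℝ g x (b i) * fderiv ℝ f x (b i) := fun x => by
    rw [← b.sum_inner_mul_inner]
    refine Finset.sum_congr rfl fun i _ => ?_
    rw [inner_gradient_left, real_inner_comm, inner_gradient_left]
  simp only [laplacian_eq_sum_fderiv_fderiv b, hinner, Finset.mul_sum]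
  rw [integral_finsetSum, integral_finsetSum, ← Finset.sum_neg_distrib]
  · refine Finset.sum_congr rfl fun i _ => ?_
    simp only [← hDDf, integral_mul_fderiv_eq_neg_fderiv_mul hg hgs
      (hDf.clm_apply contDiff_const : ContDiff ℝ 1 fun y => fderiv ℝ f y (b i))]
  · exact fun i _ => integrable_of_eq_zero_off_tsupport (by fun_prop) hgs fun x hx => by
      simp [fderiv_of_notMem_tsupport ℝ hx]
  · exact fun i _ => integrable_of_eq_zero_off_tsupport (by fun_prop) hgs fun x hx => by
      simp [image_eq_zero_of_notMem_tsupport hx]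

theorem integral_inner_sub_gradient (hg : ContDiff ℝ 1 g) (hgs : HasCompactSupport g) (z : E) :
    ∫ x, ⟪x - z, ∇ g x⟫ ∂μ = -(finrank ℝ E * ∫ x, g x ∂μ) := by
  have b := stdOrthonormalBasis ℝ E
  have hDg := hg.continuous_fderiv one_ne_zero
  have hinner : ∀ x, ⟪x - z, ∇ g x⟫ = ∑ i, ⟪x - z, b i⟫ * fderiv ℝ g x (b i) := fun x => by
    rw [← b.sum_inner_mul_inner]
    refine Finset.sum_congr rfl fun i _ => ?_
    rw [real_inner_comm (∇ g x), inner_gradient_left]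
  have hcoord : ∀ i x, fderiv ℝ (fun y => ⟪y - z, b i⟫) x (b i) = 1 := fun i x => by
    rw [fderiv_inner_apply ℝ (by fun_prop) (by fun_prop), fderiv_sub_const]
    simp
  have hparts : ∀ i, ∫ x, ⟪x - z, b i⟫ * fderiv ℝ g x (b i) ∂μ = -∫ x, g x ∂μ := fun i => by
    have hlin : ContDiff ℝ 1 fun y => ⟪y - z, b i⟫ :=
      (contDiff_id.sub contDiff_const).inner ℝ contDiff_const
    have h := integral_mul_fderiv_eq_neg_fderiv_mul (μ := μ) hg hgs hlin (b i)
    simp only [hcoord, mul_one] at h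
    simp only [h, neg_neg, mul_comm]
  simp only [hinner]
  rw [integral_finsetSum]
  · simp [hparts]
  · exact fun i _ => integrable_of_eq_zero_off_tsupport (by fun_prop) hgs fun x hx => by
      simp [fderiv_of_notMem_tsupport ℝ hx]

theorem integral_laplacian_mul_radial (hf : ContDiff ℝ 2 f) (hfs : HasCompactSupport f) (z : E) :
    ∫ x, Δ f x * (2 * ⟪x - z, ∇ f x⟫ + finrank ℝ E * f x) ∂μ = -(2 * ∫ x, ‖∇ f x‖ ^ 2 ∂μ) := by
  have hgrad : ContDiff ℝ 1 (∇ f) := contDiff_gradient hf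
  have hP : ContDiff ℝ 1 fun x => ⟪x - z, ∇ f x⟫ :=
    (contDiff_id.sub contDiff_const).inner ℝ hgrad
  have hf0 : ∀ x ∉ tsupport f, f x = 0 := fun x => image_eq_zero_of_notMem_tsupport
  have hf1 : ∀ x ∉ tsupport f, ∇ f x = 0 := fun x => gradient_eq_zero_of_notMem_tsupport
  have hsupp : ∀ {F : E → ℝ}, (∀ x ∉ tsupport f, F x = 0) → HasCompactSupport F :=
    fun h => .intro' hfs (isClosed_tsupport f) fun {x} => h x
  have hsq : HasCompactSupport fun x => ‖∇ f x‖ ^ 2 := hsupp fun x hx => by simp [hf1 x hx]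
  have hEuler := integral_inner_sub_gradient (μ := μ) (hgrad.norm_sq ℝ) hsq z
  have hP_green : ∫ x, ⟪x - z, ∇ f x⟫ * Δ f x ∂μ = _ :=
    integral_mul_laplacian_eq_neg (μ := μ) hf hP (hsupp fun x hx => by simp [hf1 x hx])
  have hf_green : ∫ x, f x * Δ f x ∂μ = _ :=
    integral_mul_laplacian_eq_neg (μ := μ) hf (hf.of_le one_le_two) hfs
  have hcont := continuous_laplacian hf
  have hgc := hgrad.continuous
  have hc : Continuous fun x => ⟪x - z, ∇ (fun y => ‖∇ f y‖ ^ 2) x⟫ / 2 := by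
    have := (contDiff_gradient (n := 0) (by simpa using hgrad.norm_sq ℝ)).continuous
    fun_prop
  have hfc := hf.continuous
  simp only [inner_gradient_inner_sub_gradient hf, real_inner_self_eq_norm_sq] at hP_green hf_green
  rw [integral_add (integrable_of_eq_zero_off_tsupport (by fun_prop) hfs fun x hx => by
      simp [hf1 x hx]) (integrable_of_eq_zero_off_tsupport hc hsq fun x hx => by
      simp [gradient_eq_zero_of_notMem_tsupport hx]), integral_div, hEuler] at hP_green
  calc ∫ x, Δ f x * (2 * ⟪x - z, ∇ f x⟫ + finrank ℝ E * f x) ∂μ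
      = ∫ x, (2 * (⟪x - z, ∇ f x⟫ * Δ f x) + finrank ℝ E * (f x * Δ f x)) ∂μ := by
        congr 1 with x; ring
    _ = 2 * ∫ x, ⟪x - z, ∇ f x⟫ * Δ f x ∂μ + finrank ℝ E * ∫ x, f x * Δ f x ∂μ := by
        rw [integral_add, integral_const_mul, integral_const_mul] <;>
        exact integrable_of_eq_zero_off_tsupport (by fun_prop) hfs fun x hx => by
          simp [hf0 x hx, hf1 x hx]
    _ = -(2 * ∫ x, ‖∇ f x‖ ^ 2 ∂μ) := by rw [hP_green, hf_green]; ring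

theorem integral_norm_sq_mul_radial (hf : ContDiff ℝ 1 f) (hfs : HasCompactSupport f) (z : E) :
    ∫ x, ‖x - z‖ ^ 2 * f x * (2 * ⟪x - z, ∇ f x⟫ + finrank ℝ E * f x) ∂μ =
      -(2 * ∫ x, ‖x - z‖ ^ 2 * f x ^ 2 ∂μ) := by
  have hgc := (contDiff_gradient (n := 0) (by simpa using hf)).continuous
  have hfc := hf.continuous
  have hf0 : ∀ x ∉ tsupport f, f x = 0 := fun x => image_eq_zero_of_notMem_tsupport
  have hgrad : ∀ x, ⟪x - z, ∇ (fun y => ‖y - z‖ ^ 2 * f y ^ 2) x⟫ =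
      2 * (‖x - z‖ ^ 2 * f x ^ 2) + ‖x - z‖ ^ 2 * f x * (2 * ⟪x - z, ∇ f x⟫) := fun x => by
    have hfx := hf.differentiable one_ne_zero x
    rw [gradient_mul ((contDiff_norm_sub_sq (n := 1) z).differentiable one_ne_zero x) (by fun_prop),
      (hasGradientAt_norm_sub_sq x z).gradient,
      gradient_comp (H := (· ^ 2)) (by simpa using hasDerivAt_pow 2 (f x)) hfx]
    simp [inner_add_right, inner_smul_right]
    ring
  have hEuler := integral_inner_sub_gradient (μ := μ)
    ((contDiff_norm_sub_sq z).mul (hf.pow 2))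
    (.intro' hfs (isClosed_tsupport f) fun x hx => by simp [hf0 x hx]) z
  simp only [hgrad] at hEuler
  calc ∫ x, ‖x - z‖ ^ 2 * f x * (2 * ⟪x - z, ∇ f x⟫ + finrank ℝ E * f x) ∂μ
      = ∫ x, (2 * (‖x - z‖ ^ 2 * f x ^ 2) + ‖x - z‖ ^ 2 * f x * (2 * ⟪x - z, ∇ f x⟫) +
          (finrank ℝ E - 2) * (‖x - z‖ ^ 2 * f x ^ 2)) ∂μ := by
        congr 1 with x; ring
    _ = -(finrank ℝ E * ∫ x, ‖x - z‖ ^ 2 * f x ^ 2 ∂μ) +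
          (finrank ℝ E - 2) * ∫ x, ‖x - z‖ ^ 2 * f x ^ 2 ∂μ := by
        rw [integral_add, integral_const_mul, hEuler] <;>
        exact integrable_of_eq_zero_off_tsupport (by fun_prop) hfs fun x hx => by simp [hf0 x hx]
    _ = -(2 * ∫ x, ‖x - z‖ ^ 2 * f x ^ 2 ∂μ) := by ring

end IntegrationByParts

section Carleman

variable {f v : E → ℝ}

theorem integral_conjugated_laplacian_sq_ge (hf : ContDiff ℝ 2 f) (hfs : HasCompactSupport f)
    (z : E) (τ : ℝ) :
    8 * τ * ∫ x, ‖∇ f x‖ ^ 2 ∂μ + 8 * τ ^ 3 * ∫ x, ‖x - z‖ ^ 2 * f x ^ 2 ∂μ ≤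
      ∫ x, (Δ f x + τ ^ 2 * (‖x - z‖ ^ 2 * f x) -
        τ * (2 * ⟪x - z, ∇ f x⟫ + finrank ℝ E * f x)) ^ 2 ∂μ := by
  have hf1 : ContDiff ℝ 1 f := hf.of_le one_le_two
  have hfc := hf.continuous
  have hgrad : Continuous (∇ f) := (contDiff_gradient (n := 0) (by simpa using hf1)).continuous
  have hlap := continuous_laplacian hf
  have hint : ∀ {F : E → ℝ}, Continuous F →
      (∀ x, f x = 0 → ∇ f x = 0 → Δ f x = 0 → F x = 0) → Integrable F μ := fun hF h =>
    integrable_of_eq_zero_off_tsupport hF hfs fun x hx => h x (image_eq_zero_of_notMem_tsupport hx)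
      (gradient_eq_zero_of_notMem_tsupport hx) (laplacian_eq_zero_of_notMem_tsupport hx)
  have hlapB := hint (F := fun x => Δ f x * (2 * ⟪x - z, ∇ f x⟫ + finrank ℝ E * f x))
    (by fun_prop) (by simp +contextual)
  have hwB := hint
    (F := fun x => ‖x - z‖ ^ 2 * f x * (2 * ⟪x - z, ∇ f x⟫ + finrank ℝ E * f x))
    (by fun_prop) (by simp +contextual)
  calc 8 * τ * ∫ x, ‖∇ f x‖ ^ 2 ∂μ + 8 * τ ^ 3 * ∫ x, ‖x - z‖ ^ 2 * f x ^ 2 ∂μ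
      = ∫ x, (-(4 * τ) * (Δ f x * (2 * ⟪x - z, ∇ f x⟫ + finrank ℝ E * f x)) +
          -(4 * τ ^ 3) * (‖x - z‖ ^ 2 * f x * (2 * ⟪x - z, ∇ f x⟫ + finrank ℝ E * f x))) ∂μ := by
        rw [integral_add (hlapB.const_mul _) (hwB.const_mul _), integral_const_mul,
          integral_const_mul, integral_laplacian_mul_radial hf hfs,
          integral_norm_sq_mul_radial hf1 hfs]
        ring
    _ ≤ _ := by
        refine integral_mono ((hlapB.const_mul _).add (hwB.const_mul _))
          (hint (by fun_prop) (by simp +contextual)) fun x => ?_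
        -- `(A - τ B)² = (A + τ B)² - 4 τ A B` with `A` symmetric and `B` antisymmetric
        have := sq_nonneg (Δ f x + τ ^ 2 * (‖x - z‖ ^ 2 * f x) +
          τ * (2 * ⟪x - z, ∇ f x⟫ + finrank ℝ E * f x))
        dsimp only
        linarith

theorem integral_exp_mul_gradient_sq_le (hv : ContDiff ℝ 2 v) (hvs : HasCompactSupport v) (z : E)
    {τ : ℝ} (hτ : 0 ≤ τ) :
    ∫ x, Real.exp (τ * ‖x - z‖ ^ 2) *
        (2 * τ * ‖∇ v x‖ ^ 2 + 4 * τ ^ 3 * (‖x - z‖ ^ 2 * v x ^ 2)) ∂μ ≤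
      ∫ x, Real.exp (τ * ‖x - z‖ ^ 2) * Δ v x ^ 2 ∂μ := by
  set f := fun x => Real.exp (τ / 2 * ‖x - z‖ ^ 2) * v x with hf_def
  have hf : ContDiff ℝ 2 f := (contDiff_exp_norm_sub_sq _ z).mul hv
  have hfs : HasCompactSupport f := hvs.mul_left
  have hexp : ∀ x : E, Real.exp (τ * ‖x - z‖ ^ 2) = Real.exp (τ / 2 * ‖x - z‖ ^ 2) ^ 2 :=
    fun x => by rw [← Real.exp_nat_mul]; ring_nf
  have hgrad {h : E → ℝ} (hh : ContDiff ℝ 2 h) : Continuous (∇ h) :=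
    (contDiff_gradient (n := 1) hh).continuous
  have hgradf := hgrad hf
  have hgradv := hgrad hv
  have hfc := hf.continuous
  have hvc := hv.continuous
  have hgradf_int : Integrable (fun x => ‖∇ f x‖ ^ 2) μ :=
    integrable_of_eq_zero_off_tsupport (by fun_prop) hfs fun x hx => by
      simp [gradient_eq_zero_of_notMem_tsupport hx]
  have hf_int : Integrable (fun x => ‖x - z‖ ^ 2 * f x ^ 2) μ :=
    integrable_of_eq_zero_off_tsupport (by fun_prop) hfs fun x hx => by
      simp [image_eq_zero_of_notMem_tsupport hx]
  calc ∫ x, Real.exp (τ * ‖x - z‖ ^ 2) *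
        (2 * τ * ‖∇ v x‖ ^ 2 + 4 * τ ^ 3 * (‖x - z‖ ^ 2 * v x ^ 2)) ∂μ
      ≤ ∫ x, (8 * τ * ‖∇ f x‖ ^ 2 + 8 * τ ^ 3 * (‖x - z‖ ^ 2 * f x ^ 2)) ∂μ := by
        refine integral_mono (integrable_of_eq_zero_off_tsupport (by fun_prop) hvs fun x hx => by
            simp [gradient_eq_zero_of_notMem_tsupport hx, image_eq_zero_of_notMem_tsupport hx])
          ((hgradf_int.const_mul _).add (hf_int.const_mul _)) fun x => ?_
        have hgrad_le := mul_le_mul_of_nonneg_left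
          (norm_gradient_exp_mul_sq_ge (hv.differentiable two_ne_zero x) τ z) hτ
        have hpos := mul_nonneg hτ (sq_nonneg ‖∇ f x‖)
        simp only [← hf_def] at hgrad_le ⊢
        have hfx : f x ^ 2 = Real.exp (τ * ‖x - z‖ ^ 2) * v x ^ 2 := by
          rw [hexp, hf_def, mul_pow]
        rw [hfx] at hgrad_le ⊢
        linarith
    _ = 8 * τ * ∫ x, ‖∇ f x‖ ^ 2 ∂μ + 8 * τ ^ 3 * ∫ x, ‖x - z‖ ^ 2 * f x ^ 2 ∂μ := by
        rw [integral_add (hgradf_int.const_mul _) (hf_int.const_mul _), integral_const_mul,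
          integral_const_mul]
    _ ≤ _ := integral_conjugated_laplacian_sq_ge hf hfs z τ
    _ = ∫ x, Real.exp (τ * ‖x - z‖ ^ 2) * Δ v x ^ 2 ∂μ := by
        congr 1 with x
        rw [hexp, ← mul_pow, ← conjugated_laplacian_exp_mul hv.contDiffAt]

end Carleman

section UniqueContinuation

theorem eq_zero_of_integral_exp_mul_le {X : Type*} [TopologicalSpace X] [MeasurableSpace X]
    [OpensMeasurableSpace X] {μ : Measure X} [IsFiniteMeasureOnCompacts μ] [μ.IsOpenPosMeasure]
    {f φ : X → ℝ} {K c : ℝ} (hf : Continuous f) (hfs : HasCompactSupport f) (hf0 : ∀ x, 0 ≤ f x)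
    (hφ : Continuous φ)
    (h : ∀ᶠ τ in atTop, ∫ x, Real.exp (τ * φ x) * f x ∂μ ≤ K * Real.exp (τ * c)) {x : X}
    (hx : c < φ x) : f x = 0 := by
  have hmul : HasCompactSupport fun y => max (φ y - c) 0 * f y := hfs.mul_left
  have hcont : Continuous fun y => max (φ y - c) 0 * f y := by fun_prop
  have hle : ∀ᶠ τ in atTop, ∫ y, max (φ y - c) 0 * f y ∂μ ≤ K / τ := by
    filter_upwards [h, eventually_gt_atTop 0] with τ hτ hτ0
    rw [le_div_iff₀ hτ0]
    have hexp : ∫ y, τ * (max (φ y - c) 0 * f y) ∂μ ≤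
        ∫ y, Real.exp (-(τ * c)) * (Real.exp (τ * φ y) * f y) ∂μ := by
      refine integral_mono ((hcont.integrable_of_hasCompactSupport hmul).const_mul τ)
        (Continuous.integrable_of_hasCompactSupport (by fun_prop) hfs.mul_left.mul_left)
        fun y => ?_
      dsimp only
      rw [← mul_assoc, ← mul_assoc, ← Real.exp_add]
      refine mul_le_mul_of_nonneg_right ?_ (hf0 y)
      rw [mul_max_of_nonneg _ _ hτ0.le, mul_zero]
      refine max_le ?_ (Real.exp_pos _).le
      linarith [Real.add_one_le_exp (-(τ * c) + τ * φ y)]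
    rw [integral_const_mul, integral_const_mul] at hexp
    calc (∫ y, max (φ y - c) 0 * f y ∂μ) * τ
        ≤ Real.exp (-(τ * c)) * (K * Real.exp (τ * c)) := by
          rw [mul_comm]; exact hexp.trans (by gcongr)
      _ = K := by rw [mul_left_comm, ← Real.exp_add]; simp
  have hint : ∫ y, max (φ y - c) 0 * f y ∂μ ≤ 0 :=
    ge_of_tendsto (tendsto_const_nhds.div_atTop tendsto_id) hle
  by_contra hfx
  have hpos := hcont.integral_pos_of_hasCompactSupport_nonneg_nonzero (μ := μ) hmul
    (fun y => mul_nonneg (le_max_right _ _) (hf0 y))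
    (x := x) (mul_ne_zero (lt_max_of_lt_left (sub_pos.2 hx)).ne' hfx)
  exact hpos.not_ge hint

variable {v : E → ℝ} {z : E} {ρ A : ℝ}

theorem integral_exp_mul_le_of_laplacian_sq_le (hv : ContDiff ℝ 2 v) (hvs : HasCompactSupport v)
    (hρ : 0 ≤ ρ) (hA : ∀ x, ρ ≤ ‖x - z‖ → Δ v x ^ 2 ≤ A * (‖∇ v x‖ ^ 2 + v x ^ 2)) {τ : ℝ}
    (hτ : 0 ≤ τ) (hAτ : A ≤ τ) (hAτρ : A ≤ 2 * τ ^ 3 * ρ ^ 2) :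
    ∫ x, Real.exp (τ * ‖x - z‖ ^ 2) *
        (τ * ‖∇ v x‖ ^ 2 + 2 * τ ^ 3 * (‖x - z‖ ^ 2 * v x ^ 2)) ∂μ ≤
      (∫ x, Δ v x ^ 2 ∂μ) * Real.exp (τ * ρ ^ 2) := by
  have hgradv : Continuous (∇ v) := (contDiff_gradient (n := 1) hv).continuous
  have hlap := continuous_laplacian hv
  have hvc := hv.continuous
  have hint : ∀ {F : E → ℝ}, Continuous F →
      (∀ x, v x = 0 → ∇ v x = 0 → Δ v x = 0 → F x = 0) → Integrable F μ := fun hF h =>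
    integrable_of_eq_zero_off_tsupport hF hvs fun x hx => h x (image_eq_zero_of_notMem_tsupport hx)
      (gradient_eq_zero_of_notMem_tsupport hx) (laplacian_eq_zero_of_notMem_tsupport hx)
  set I : E → ℝ := fun x => Real.exp (τ * ‖x - z‖ ^ 2) *
    (τ * ‖∇ v x‖ ^ 2 + 2 * τ ^ 3 * (‖x - z‖ ^ 2 * v x ^ 2)) with hI_def
  have hI : Integrable I μ := hint (by fun_prop) (by simp +contextual [hI_def])
  have hlap_int : Integrable (fun x => Real.exp (τ * ρ ^ 2) * Δ v x ^ 2) μ :=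
    hint (by fun_prop) (by simp +contextual)
  have hsplit : ∀ x, Real.exp (τ * ‖x - z‖ ^ 2) * Δ v x ^ 2 ≤
      Real.exp (τ * ρ ^ 2) * Δ v x ^ 2 + I x := fun x => by
    rcases le_total ‖x - z‖ ρ with hx | hx
    · have hI0 : 0 ≤ I x := by positivity
      exact le_add_of_le_of_nonneg (by gcongr) hI0
    · refine le_add_of_nonneg_of_le (by positivity) ?_
      refine mul_le_mul_of_nonneg_left ((hA x hx).trans ?_) (Real.exp_pos _).le
      rw [mul_add, ← mul_assoc (2 * τ ^ 3)]
      have hAx : A ≤ 2 * τ ^ 3 * ‖x - z‖ ^ 2 := hAτρ.trans (by gcongr)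
      gcongr
  have hcarleman : 2 * ∫ x, I x ∂μ ≤
      (∫ x, Δ v x ^ 2 ∂μ) * Real.exp (τ * ρ ^ 2) + ∫ x, I x ∂μ := calc
    2 * ∫ x, I x ∂μ
      = ∫ x, Real.exp (τ * ‖x - z‖ ^ 2) *
          (2 * τ * ‖∇ v x‖ ^ 2 + 4 * τ ^ 3 * (‖x - z‖ ^ 2 * v x ^ 2)) ∂μ := by
        rw [← integral_const_mul]
        congr 1 with x
        ring
    _ ≤ ∫ x, Real.exp (τ * ‖x - z‖ ^ 2) * Δ v x ^ 2 ∂μ :=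
        integral_exp_mul_gradient_sq_le hv hvs z hτ
    _ ≤ ∫ x, (Real.exp (τ * ρ ^ 2) * Δ v x ^ 2 + I x) ∂μ :=
        integral_mono (hint (by fun_prop) (by simp +contextual)) (hlap_int.add hI) hsplit
    _ = (∫ x, Δ v x ^ 2 ∂μ) * Real.exp (τ * ρ ^ 2) + ∫ x, I x ∂μ := by
        rw [integral_add hlap_int hI, integral_const_mul, mul_comm]
  linarith

theorem eq_zero_of_laplacian_sq_le (hv : ContDiff ℝ 2 v) (hvs : HasCompactSupport v) (hρ : 0 < ρ)
    (hA : ∀ x, ρ ≤ ‖x - z‖ → Δ v x ^ 2 ≤ A * (‖∇ v x‖ ^ 2 + v x ^ 2)) {x : E}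
    (hx : ρ < ‖x - z‖) : v x = 0 := by
  borelize E
  have hvc := hv.continuous
  have hgradv : Continuous (∇ v) := (contDiff_gradient (n := 1) hv).continuous
  suffices ‖x - z‖ ^ 2 * v x ^ 2 = 0 by simpa [(hρ.trans hx).ne'] using this
  have hv0 : ∀ y ∉ tsupport v, v y = 0 := fun y => image_eq_zero_of_notMem_tsupport
  refine eq_zero_of_integral_exp_mul_le (μ := Measure.addHaar) (φ := fun y => ‖y - z‖ ^ 2)
    (f := fun y => ‖y - z‖ ^ 2 * v y ^ 2) (c := ρ ^ 2)
    (K := ∫ y, Δ v y ^ 2 ∂Measure.addHaar) (by fun_prop)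
    (.intro' hvs (isClosed_tsupport v) fun {y} hy => by simp [hv0 y hy])
    (fun y => by positivity) (by fun_prop) ?_ (by gcongr)
  have hlarge : ∀ᶠ τ : ℝ in atTop, A ≤ 2 * τ ^ 3 * ρ ^ 2 :=
    (((tendsto_pow_atTop three_ne_zero).const_mul_atTop two_pos).atTop_mul_const
      (by positivity)).eventually_ge_atTop A
  filter_upwards [hlarge, eventually_ge_atTop 1, eventually_ge_atTop A] with τ hτρ hτ1 hτA
  have hτ0 : 0 ≤ τ := zero_le_one.trans hτ1
  refine le_trans ?_ (integral_exp_mul_le_of_laplacian_sq_le hv hvs hρ.le hA hτ0 hτA hτρ)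
  refine integral_mono
    (integrable_of_eq_zero_off_tsupport (by fun_prop) hvs fun y hy => by simp [hv0 y hy])
    (integrable_of_eq_zero_off_tsupport (by fun_prop) hvs fun y hy => by
      simp [hv0 y hy, gradient_eq_zero_of_notMem_tsupport hy]) fun y => ?_
  have hτ3 : 1 ≤ 2 * τ ^ 3 := by linarith [one_le_pow₀ hτ1 (n := 3)]
  exact mul_le_mul_of_nonneg_left (le_add_of_nonneg_of_le (by positivity)
    (le_mul_of_one_le_left (by positivity) hτ3)) (Real.exp_pos _).le

end UniqueContinuation

section MovingBall

variable {G : Type*} [NormedAddCommGroup G] {F : E → G} {r : ℝ}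

theorem integrableOn_ball (hF : Continuous F) (x : E) (r : ℝ) : IntegrableOn F (ball x r) μ :=
  (hF.continuousOn.integrableOn_compact (isCompact_closedBall x r)).mono_set ball_subset_closedBall

variable [NormedSpace ℝ G]

theorem setIntegral_ball_eq (hr : r ≠ 0) (F : E → G) (x : E) :
    ∫ y in ball x r, F y ∂μ = ∫ y in closedBall 0 r, F (x + y) ∂μ := by
  have hsphere : sphere (0 : E) r =ᵐ[μ] (∅ : Set E) :=
    ae_eq_empty.2 (Measure.addHaar_sphere_of_ne_zero μ 0 hr)
  rw [← ball_union_sphere, setIntegral_congr_set (union_ae_eq_left_of_ae_eq_empty hsphere),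
    ← (measurePreserving_add_left μ x).setIntegral_preimage_emb
      (Homeomorph.addLeft x).measurableEmbedding F (ball x r), preimage_add_ball, sub_self]

theorem continuous_setIntegral_ball (hF : Continuous F) (hr : r ≠ 0) :
    Continuous fun x => ∫ y in ball x r, F y ∂μ := by
  simp only [setIntegral_ball_eq hr]
  exact continuous_parametric_integral_of_continuous (f := fun x y => F (x + y))
    (by fun_prop) (isCompact_closedBall _ _)

theorem hasFDerivAt_setIntegral_ball (hF : ContDiff ℝ 1 F) (hr : r ≠ 0) (x : E) :
    HasFDerivAt (fun x => ∫ y in ball x r, F y ∂μ) (∫ y in ball x r, fderiv ℝ F y ∂μ) x := by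
  have hFc : Continuous F := hF.continuous
  have hDc : Continuous (fderiv ℝ F) := hF.continuous_fderiv one_ne_zero
  obtain ⟨B, hB⟩ := (isCompact_closedBall x (1 + r)).exists_bound_of_continuousOn hDc.continuousOn
  simp only [setIntegral_ball_eq hr]
  refine hasFDerivAt_integral_of_dominated_of_fderiv_le (s := ball x 1)
    (F' := fun x y => fderiv ℝ F (x + y)) (bound := fun _ => B) (ball_mem_nhds x one_pos)
    (.of_forall fun x => Continuous.aestronglyMeasurable (by fun_prop)) ?_
    (Continuous.aestronglyMeasurable (by fun_prop)) ?_ ?_ ?_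
  · exact ContinuousOn.integrableOn_compact (isCompact_closedBall _ _) (by fun_prop)
  · filter_upwards [ae_restrict_mem measurableSet_closedBall] with y hy x' hx'
    refine hB _ ?_
    rw [mem_closedBall_zero_iff] at hy
    rw [mem_ball_iff_norm] at hx'
    rw [mem_closedBall_iff_norm, add_sub_right_comm]
    exact (norm_add_le _ _).trans (add_le_add hx'.le hy)
  · exact integrableOn_const (isCompact_closedBall _ _).measure_ne_top
  · exact .of_forall fun y x' _ =>
      (hasFDerivAt_comp_add_right y).2 (hF.differentiable one_ne_zero _).hasFDerivAt

theorem contDiff_one_setIntegral_ball (hF : ContDiff ℝ 1 F) (hr : r ≠ 0) :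
    ContDiff ℝ 1 fun x => ∫ y in ball x r, F y ∂μ :=
  contDiff_one_iff_hasFDerivAt.2 ⟨_,
    continuous_setIntegral_ball (hF.continuous_fderiv one_ne_zero) hr,
    hasFDerivAt_setIntegral_ball hF hr⟩

theorem contDiff_two_setIntegral_ball (hF : ContDiff ℝ 2 F) (hr : r ≠ 0) :
    ContDiff ℝ 2 fun x => ∫ y in ball x r, F y ∂μ :=
  (contDiff_succ_iff_hasFDerivAt (n := 1)).2 ⟨_,
    contDiff_one_setIntegral_ball (hF.fderiv_right one_add_one_eq_two.le) hr,
    hasFDerivAt_setIntegral_ball (hF.of_le one_le_two) hr⟩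

theorem setIntegral_ball_apply {D : E → E →L[ℝ] G} (hD : Continuous D) (x v : E) (r : ℝ) :
    (∫ y in ball x r, D y ∂μ) v = ∫ y in ball x r, D y v ∂μ :=
  ContinuousLinearMap.integral_apply (integrableOn_ball hD x r) v

theorem laplacian_setIntegral_ball (hF : ContDiff ℝ 2 F) (hr : r ≠ 0) (x : E) :
    Δ (fun x => ∫ y in ball x r, F y ∂μ) x = ∫ y in ball x r, Δ F y ∂μ := by
  have b := stdOrthonormalBasis ℝ E
  have hD : ContDiff ℝ 1 (fderiv ℝ F) := hF.fderiv_right one_add_one_eq_two.le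
  have hD2 : Continuous (fderiv ℝ (fderiv ℝ F)) := hD.continuous_fderiv one_ne_zero
  have hfderiv : fderiv ℝ (fun x => ∫ y in ball x r, F y ∂μ) =
      fun x => ∫ y in ball x r, fderiv ℝ F y ∂μ :=
    funext fun x => (hasFDerivAt_setIntegral_ball (hF.of_le one_le_two) hr x).fderiv
  simp only [laplacian_eq_sum_fderiv_fderiv b, hfderiv,
    (hasFDerivAt_setIntegral_ball hD hr x).fderiv]
  rw [integral_finsetSum _ fun i _ => integrableOn_ball (by fun_prop) x r]
  refine Finset.sum_congr rfl fun i _ => ?_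
  rw [setIntegral_ball_apply hD2, setIntegral_ball_apply (by fun_prop)]

end MovingBall

section ReversePoincare

variable {v W : E → ℝ} {β : E → E} {M Q C r : ℝ}

theorem laplacian_setIntegral_ball_sq_le (hv : ContDiff ℝ 2 v) (hr : 0 < r) (hC : 0 < C) {x : E}
    (hβ : ∀ y ∈ ball x r, ‖β y‖ ≤ M) (hW : ∀ y ∈ ball x r, |W y| ≤ Q)
    (hsol : ∀ y ∈ ball x r, Δ v y + ⟪β y, ∇ v y⟫ + W y * v y = 0)
    (hG : ∫ y in ball x r, ‖∇ v y‖ ^ 2 ∂μ ≤ C * ∫ y in ball x r, v y ^ 2 ∂μ) :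
    Δ (fun x => ∫ y in ball x r, v y ^ 2 ∂μ) x ≤
      2 * (M * √C + Q + C) * ∫ y in ball x r, v y ^ 2 ∂μ := by
  have hM : 0 ≤ M := (norm_nonneg _).trans (hβ x (mem_ball_self hr))
  have hs : 0 < √C := Real.sqrt_pos.2 hC
  have hvc : Continuous v := hv.continuous
  have hgc : Continuous (∇ v) := (contDiff_gradient (n := 1) hv).continuous
  have hI₁ : IntegrableOn (fun y => ‖∇ v y‖ ^ 2) (ball x r) μ := integrableOn_ball (by fun_prop) x r
  have hI₂ : IntegrableOn (fun y => v y ^ 2) (ball x r) μ := integrableOn_ball (by fun_prop) x r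
  rw [laplacian_setIntegral_ball (hv.pow 2) hr.ne']
  calc ∫ y in ball x r, Δ (fun y => v y ^ 2) y ∂μ
      ≤ ∫ y in ball x r, ((2 + M / √C) * ‖∇ v y‖ ^ 2 + (M * √C + 2 * Q) * v y ^ 2) ∂μ := by
        refine setIntegral_mono_on (integrableOn_ball (continuous_laplacian (hv.pow 2)) x r)
          ((hI₁.const_mul _).add (hI₂.const_mul _)) measurableSet_ball fun y hy => ?_
        rw [laplacian_sq hv.contDiffAt]
        linarith [two_mul_mul_le_of_add_inner_add_mul_eq_zero (hsol y hy) (hβ y hy) (hW y hy) hs]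
    _ = (2 + M / √C) * ∫ y in ball x r, ‖∇ v y‖ ^ 2 ∂μ +
          (M * √C + 2 * Q) * ∫ y in ball x r, v y ^ 2 ∂μ := by
        rw [integral_add (hI₁.const_mul _) (hI₂.const_mul _), integral_const_mul,
          integral_const_mul]
    _ ≤ (2 + M / √C) * (C * ∫ y in ball x r, v y ^ 2 ∂μ) +
          (M * √C + 2 * Q) * ∫ y in ball x r, v y ^ 2 ∂μ := by gcongr
    _ = 2 * (M * √C + Q + C) * ∫ y in ball x r, v y ^ 2 ∂μ := by
        have hdiv : M / √C * C = M * √C := by rw [div_mul_eq_mul_div, mul_div_assoc, Real.div_sqrt]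
        linear_combination (∫ y in ball x r, v y ^ 2 ∂μ) * hdiv

theorem eq_zero_of_setIntegral_ball_sq_nonpos (hv : Continuous v) (hr : 0 < r) {x : E}
    (h : ∫ y in ball x r, v y ^ 2 ∂μ ≤ 0) : v x = 0 := by
  contrapose! h
  rw [setIntegral_pos_iff_support_of_nonneg_ae (.of_forall fun y => sq_nonneg (v y))
    (integrableOn_ball (by fun_prop) x r)]
  exact ((Continuous.isOpen_support (by fun_prop)).inter isOpen_ball).measure_pos μ
    ⟨x, by simpa using h, mem_ball_self hr⟩

end ReversePoincare

section ExteriorProblem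

variable {U u V : E → ℝ} {b : E → E} {z : E} {ρ M Q C r κ : ℝ}

theorem exists_setIntegral_ball_sq_pos (hU : ContDiff ℝ 2 U) (hρ : 0 < ρ) (hr : 0 < r)
    (hb : ∀ x, ρ ≤ ‖x - z‖ → ‖b x‖ ≤ M) (hV : ∀ x, ρ ≤ ‖x - z‖ → |V x| ≤ Q)
    (hsol : ∀ x, ρ ≤ ‖x - z‖ → Δ U x + ⟪b x, ∇ U x⟫ + V x * U x = 0)
    (hne : ∃ x, ρ < ‖x - z‖ ∧ U x ≠ 0) (R : ℝ) :
    ∃ x, R < ‖x‖ ∧ 0 < ∫ y in ball x r, U y ^ 2 ∂μ := by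
  by_contra! hvanish
  obtain ⟨x, hx, hUx⟩ := hne
  have hUs : HasCompactSupport U := by
    refine HasCompactSupport.intro (isCompact_closedBall (0 : E) R) fun y hy => ?_
    rw [mem_closedBall_zero_iff, not_le] at hy
    exact eq_zero_of_setIntegral_ball_sq_nonpos hU.continuous hr (hvanish y hy)
  exact hUx (eq_zero_of_laplacian_sq_le hU hUs hρ (fun y hy =>
    sq_le_of_add_inner_add_mul_eq_zero (hsol y hy) (hb y hy) (hV y hy)) hx)

theorem exists_exp_le_setIntegral_ball_sq_of_contDiff (hE : 2 ≤ finrank ℝ E)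
    (hU : ContDiff ℝ 2 U) (hρ : 0 < ρ) (hr : 0 < r) (hC : 0 < C)
    (hb : ∀ x, ρ ≤ ‖x - z‖ → ‖b x‖ ≤ M) (hV : ∀ x, ρ ≤ ‖x - z‖ → |V x| ≤ Q)
    (hsol : ∀ x, ρ ≤ ‖x - z‖ → Δ U x + ⟪b x, ∇ U x⟫ + V x * U x = 0)
    (hne : ∃ x, ρ < ‖x - z‖ ∧ U x ≠ 0)
    (hG : ∃ R₀, ∀ x, R₀ ≤ ‖x‖ →
      ∫ y in ball x r, ‖∇ U y‖ ^ 2 ∂μ ≤ C * ∫ y in ball x r, U y ^ 2 ∂μ)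
    (hκ : √(2 * (M * √C + Q + C)) < κ) :
    ∃ c₁ > 0, ∃ R₁, ∀ x, R₁ ≤ ‖x‖ →
      c₁ * Real.exp (-(κ * ‖x‖)) ≤ ∫ y in ball x r, U y ^ 2 ∂μ := by
  obtain ⟨R₀, hG⟩ := hG
  obtain ⟨x₀, hx₀, -⟩ := id hne
  have hM : 0 ≤ M := (norm_nonneg _).trans (hb x₀ hx₀.le)
  have hQ : 0 ≤ Q := (abs_nonneg _).trans (hV x₀ hx₀.le)
  have hκ0 : 0 < κ := (Real.sqrt_nonneg _).trans_lt hκ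
  set R := max (max R₀ 0) (‖z‖ + ρ + r)
  set w : E → ℝ := fun x => ∫ y in ball x r, U y ^ 2 ∂μ
  have hw : ContDiff ℝ 2 w := contDiff_two_setIntegral_ball (hU.pow 2) hr.ne'
  have hΔw : ∀ x, R < ‖x‖ → Δ w x ≤ 2 * (M * √C + Q + C) * w x := by
    intro x hx
    have hball : ∀ y ∈ ball x r, ρ ≤ ‖y - z‖ := fun y hy =>
      (lt_norm_sub_of_mem_ball ((le_max_right _ _).trans hx.le) hy).le
    exact laplacian_setIntegral_ball_sq_le hU hr hC (fun y hy => hb y (hball y hy))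
      (fun y hy => hV y (hball y hy)) (fun y hy => hsol y (hball y hy))
      (hG x (((le_max_left _ _).trans (le_max_left _ _)).trans hx.le))
  have hpos : ∀ x, R < ‖x‖ → 0 < w x := fun x hx =>
    pos_of_laplacian_le (isOpen_lt continuous_const continuous_norm)
      (isPreconnected_setOf_lt_norm (by rw [← finrank_eq_rank]; exact_mod_cast hE)
        ((le_max_right _ _).trans (le_max_left _ _)))
      (by positivity) hw.contDiffOn (fun x _ => integral_nonneg fun y => sq_nonneg (U y)) hΔw
      (exists_setIntegral_ball_sq_pos hU hρ hr hb hV hsol hne R) hx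
  exact exists_exp_le_of_laplacian_le (by positivity) hκ0 (Real.lt_sq_of_sqrt_lt hκ)
    hw.contDiffOn hpos hΔw

theorem exists_exp_le_setIntegral_ball_sq (hE : 2 ≤ finrank ℝ E) (hρ : 0 ≤ ρ) (hr : 0 < r)
    (hC : 0 < C) (hu : ContDiffOn ℝ 2 u (closedBall z ρ)ᶜ)
    (hb : ∀ x ∉ closedBall z ρ, ‖b x‖ ≤ M) (hV : ∀ x ∉ closedBall z ρ, |V x| ≤ Q)
    (hsol : ∀ x ∉ closedBall z ρ, Δ u x + ⟪b x, ∇ u x⟫ + V x * u x = 0)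
    (hne : ∃ x ∉ closedBall z ρ, u x ≠ 0)
    (hG : ∃ R₀, ∀ x, R₀ ≤ ‖x‖ →
      ∫ y in ball x r, ‖∇ u y‖ ^ 2 ∂μ ≤ C * ∫ y in ball x r, u y ^ 2 ∂μ)
    (hκ : √(2 * (M * √C + Q + C)) < κ) :
    ∃ c₁ > 0, ∃ R₁, ∀ x, R₁ ≤ ‖x‖ →
      c₁ * Real.exp (-(κ * ‖x‖)) ≤ ∫ y in ball x r, u y ^ 2 ∂μ := by
  simp only [mem_closedBall_iff_norm, not_le] at hb hV hsol hne
  obtain ⟨x₀, hx₀, hux₀⟩ := hne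
  obtain ⟨R₀, hG⟩ := hG
  obtain ⟨ρ₂, hρ₂, hρ₂x₀⟩ := exists_between hx₀
  obtain ⟨ρ₁, hρ₁, hρ₁₂⟩ := exists_between hρ₂
  obtain ⟨U, hU, hUu⟩ := exists_contDiff_eqOn_compl_ball (n := 2) hρ hρ₁ hu
  have hnhds : ∀ y, ρ₁ < ‖y - z‖ → U =ᶠ[𝓝 y] u := fun y hy =>
    (hUu.mono (compl_subset_compl.2 ball_subset_closedBall)).eventuallyEq_of_mem
      (isClosed_closedBall.isOpen_compl.mem_nhds (by simpa [dist_eq_norm] using hy))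
  have hball : ∀ x, ‖z‖ + ρ₁ + r ≤ ‖x‖ →
      (∫ y in ball x r, U y ^ 2 ∂μ = ∫ y in ball x r, u y ^ 2 ∂μ) ∧
      ∫ y in ball x r, ‖∇ U y‖ ^ 2 ∂μ = ∫ y in ball x r, ‖∇ u y‖ ^ 2 ∂μ := fun x hx =>
    ⟨setIntegral_congr_fun measurableSet_ball fun y hy => by
      simp only [(hnhds y (lt_norm_sub_of_mem_ball hx hy)).eq_of_nhds],
    setIntegral_congr_fun measurableSet_ball fun y hy => by
      simp only [(hnhds y (lt_norm_sub_of_mem_ball hx hy)).gradient_eq]⟩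
  obtain ⟨c₁, hc₁, R₁, h⟩ := exists_exp_le_setIntegral_ball_sq_of_contDiff (μ := μ) hE hU
    (hρ.trans_lt hρ₂) hr hC (fun x hx => hb x (hρ₂.trans_le hx))
    (fun x hx => hV x (hρ₂.trans_le hx)) (fun x hx => by
      have hUx := hnhds x (hρ₁₂.trans_le hx)
      rw [(laplacian_congr_nhds hUx).eq_of_nhds, hUx.gradient_eq, hUx.eq_of_nhds]
      exact hsol x (hρ₂.trans_le hx))
    ⟨x₀, hρ₂x₀, by rwa [(hnhds x₀ (hρ₁₂.trans hρ₂x₀)).eq_of_nhds]⟩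
    ⟨max R₀ (‖z‖ + ρ₁ + r), fun x hx => by
      rw [(hball x ((le_max_right _ _).trans hx)).1, (hball x ((le_max_right _ _).trans hx)).2]
      exact hG x ((le_max_left _ _).trans hx)⟩ hκ
  refine ⟨c₁, hc₁, max R₁ (‖z‖ + ρ₁ + r), fun x hx => ?_⟩
  rw [← (hball x ((le_max_right _ _).trans hx)).1]
  exact h x ((le_max_left _ _).trans hx)

theorem exists_setIntegral_ball_sq_le_exp {k A : ℝ} (hk : 0 ≤ k)
    (hu : ∀ x ∉ closedBall z ρ, |u x| ≤ A * Real.exp (-(k * ‖x‖))) :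
    ∃ B, ∀ x, ‖z‖ + ρ + r ≤ ‖x‖ →
      ∫ y in ball x r, u y ^ 2 ∂μ ≤ B * Real.exp (-(2 * k * ‖x‖)) := by
  refine ⟨A ^ 2 * Real.exp (2 * k * r) * μ.real (ball 0 r), fun x hx => ?_⟩
  have hbound : ∀ y ∈ ball x r,
      ‖u y ^ 2‖ ≤ A ^ 2 * Real.exp (2 * k * r) * Real.exp (-(2 * k * ‖x‖)) := by
    intro y hy
    have hyz : y ∉ closedBall z ρ := by
      rw [mem_closedBall_iff_norm, not_le]
      exact lt_norm_sub_of_mem_ball hx hy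
    have hxy : ‖x‖ ≤ ‖y‖ + r := by
      rw [mem_ball_iff_norm'] at hy
      linarith [norm_le_norm_sub_add x y]
    calc ‖u y ^ 2‖ = |u y| ^ 2 := by rw [norm_pow, Real.norm_eq_abs]
      _ ≤ (A * Real.exp (-(k * ‖y‖))) ^ 2 := by gcongr; exact hu y hyz
      _ = A ^ 2 * Real.exp (-(2 * k * ‖y‖)) := by
        rw [mul_pow, ← Real.exp_nat_mul]
        congr 2
        push_cast
        ring
      _ ≤ A ^ 2 * Real.exp (2 * k * r + -(2 * k * ‖x‖)) := by
        gcongr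
        linarith [mul_le_mul_of_nonneg_left hxy hk]
      _ = A ^ 2 * Real.exp (2 * k * r) * Real.exp (-(2 * k * ‖x‖)) := by
        rw [Real.exp_add, ← mul_assoc]
  calc ∫ y in ball x r, u y ^ 2 ∂μ
      ≤ A ^ 2 * Real.exp (2 * k * r) * Real.exp (-(2 * k * ‖x‖)) * μ.real (ball x r) :=
        (le_abs_self _).trans (norm_setIntegral_le_of_norm_le_const measure_ball_lt_top hbound)
    _ = A ^ 2 * Real.exp (2 * k * r) * μ.real (ball 0 r) * Real.exp (-(2 * k * ‖x‖)) := by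
        rw [Measure.addHaar_real_ball_center]
        ring

theorem statement19_general (hE : 2 ≤ finrank ℝ E) (hρ : 0 ≤ ρ)
    (hb : ∀ x ∉ closedBall z ρ, ‖b x‖ ≤ M) (hV : ∀ x ∉ closedBall z ρ, |V x| ≤ Q)
    (hu : ContDiffOn ℝ 2 u (closedBall z ρ)ᶜ)
    (hsol : ∀ x ∉ closedBall z ρ, Δ u x + ⟪b x, ∇ u x⟫ + V x * u x = 0)
    (hr : 0 < r) (hC : 0 < C)
    (hG : ∃ R₀, ∀ x, R₀ ≤ ‖x‖ →
      ∫ y in ball x r, ‖∇ u y‖ ^ 2 ∂μ ≤ C * ∫ y in ball x r, u y ^ 2 ∂μ) :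
    ((∃ x ∉ closedBall z ρ, u x ≠ 0) → ∀ κ, √(2 * (M * √C + Q + C)) < κ →
      ∃ c₁ > 0, ∃ R₁, ∀ x, R₁ ≤ ‖x‖ →
        c₁ * Real.exp (-(κ * ‖x‖)) ≤ ∫ y in ball x r, u y ^ 2 ∂μ) ∧
    ∀ k, √(2 * (M * √C + Q + C)) < 2 * k →
      (∃ A, ∀ x ∉ closedBall z ρ, |u x| ≤ A * Real.exp (-(k * ‖x‖))) →
        ∀ x ∉ closedBall z ρ, u x = 0 := by
  have hlower := fun hne κ (hκ : √(2 * (M * √C + Q + C)) < κ) =>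
    exists_exp_le_setIntegral_ball_sq hE hρ hr hC hu hb hV hsol hne hG hκ
  refine ⟨hlower, fun k hk ⟨A, hA⟩ x hx => by_contra fun hux => ?_⟩
  have hk0 : 0 ≤ k := by linarith [Real.sqrt_nonneg (2 * (M * √C + Q + C))]
  have : Nontrivial E := nontrivial_of_finrank_pos (R := ℝ) (by lia)
  obtain ⟨κ, hκ, hκk⟩ := exists_between hk
  obtain ⟨c₁, hc₁, R₁, hR₁⟩ := hlower ⟨x, hx, hux⟩ κ hκ
  obtain ⟨B, hB⟩ := exists_setIntegral_ball_sq_le_exp (μ := μ) (r := r) hk0 hA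
  obtain ⟨y, hy, hlt⟩ := exists_mul_exp_lt_mul_exp (G := E) hc₁ hκk B (max R₁ (‖z‖ + ρ + r))
  exact hlt.not_ge ((hR₁ y ((le_max_left _ _).trans hy)).trans (hB y ((le_max_right _ _).trans hy)))

end ExteriorProblem

end Development

section Coordinates

open InnerProductSpace
open scoped Gradient Laplacian RealInnerProductSpace

variable {d : ℕ}

theorem sum_pd_sq (u : Euc d → ℝ) (x : Euc d) : ∑ i, pd u i x ^ 2 = ‖∇ u x‖ ^ 2 := by
  simpa [pd] using sum_fderiv_sq_eq_norm_gradient_sq (EuclideanSpace.basisFun (Fin d) ℝ) u x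

theorem sum_mul_pd (u : Euc d → ℝ) (a x : Euc d) : ∑ i, a i * pd u i x = ⟪a, ∇ u x⟫ := by
  rw [real_inner_comm, ← (EuclideanSpace.basisFun (Fin d) ℝ).sum_inner_mul_inner]
  simp only [EuclideanSpace.basisFun_apply, inner_gradient_left, EuclideanSpace.inner_single_left,
    map_one, one_mul, pd, mul_comm]

theorem sum_pd2_self {u : Euc d → ℝ} {x : Euc d} (hu : ContDiffAt ℝ 2 u x) :
    ∑ i, pd2 u i i x = Δ u x := by
  have hD : DifferentiableAt ℝ (fderiv ℝ u) x :=
    (hu.fderiv_right one_add_one_eq_two.le).differentiableAt one_ne_zero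
  rw [laplacian_eq_sum_fderiv_fderiv (EuclideanSpace.basisFun (Fin d) ℝ)]
  refine Finset.sum_congr rfl fun i _ => ?_
  rw [EuclideanSpace.basisFun_apply]
  simp [pd2, pd, fderiv_clm_apply hD (differentiableAt_const _)]

end Coordinates

/-- The concluding remark of Section 4: Landis-type lower bound for solutions
satisfying the reverse Poincaré inequality (G). -/
theorem statement19 {d : ℕ} (hd : 2 ≤ d)
    (z₀ : Euc d) (ρ : ℝ) (hρ : 0 ≤ ρ)
    (b : Euc d → Euc d) (V : Euc d → ℝ) (hbMeas : Measurable b) (hVmeas : Measurable V)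
    (M q : ℝ) (hbM : ∀ x : Euc d, ‖b x‖ ≤ M) (hVq : ∀ x : Euc d, |V x| ≤ q ^ 2)
    (u : Euc d → ℝ) (huC2 : ContDiffOn ℝ 2 u (closedBall z₀ ρ)ᶜ)
    (hunz : ∃ x ∉ closedBall z₀ ρ, u x ≠ 0)
    (hsol : ∀ x ∉ closedBall z₀ ρ,
      (∑ i, pd2 u i i x) + (∑ i, b x i * pd u i x) + V x * u x = 0)
    (r C : ℝ) (hr : 0 < r) (hC : 0 < C)
    (hG : ∃ R₀, ∀ x : Euc d, R₀ ≤ ‖x‖ →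
      (∫ y in Metric.ball x r, ∑ i, (pd u i y) ^ 2) ≤ C * ∫ y in Metric.ball x r, (u y) ^ 2) :
    (∃ Cκ > 0, ∃ R₁, ∀ x : Euc d, R₁ ≤ ‖x‖ →
      Cκ * Real.exp (-((Real.sqrt (2 * (M * Real.sqrt C + q ^ 2 + C)) + 1) * ‖x‖)) ≤
        ∫ y in Metric.ball x r, (u y) ^ 2) ∧
    ((∀ k : ℝ, 0 < k → ∃ Ck, ∀ x ∉ closedBall z₀ ρ,
        |u x| ≤ Ck * Real.exp (-(k * ‖x‖))) →
      ∀ x ∉ closedBall z₀ ρ, u x = 0) := by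
  have hu : ∀ x ∉ closedBall z₀ ρ, ContDiffAt ℝ 2 u x := fun x hx =>
    huC2.contDiffAt (isClosed_closedBall.isOpen_compl.mem_nhds hx)
  simp only [sum_pd_sq] at hG
  obtain ⟨hlower, hzero⟩ := statement19_general (by simpa using hd) hρ (fun x _ => hbM x)
    (fun x _ => hVq x) huC2 (fun x hx => by rw [← sum_pd2_self (hu x hx), ← sum_mul_pd, hsol x hx])
    hr hC hG
  have hsqrt := Real.sqrt_nonneg (2 * (M * √C + q ^ 2 + C))
  exact ⟨hlower hunz _ (lt_add_one _),
    fun hdecay => hzero _ (by linarith) (hdecay (√(2 * (M * √C + q ^ 2 + C)) + 1) (by linarith))⟩
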